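/- There exists a bounded g : ℤ → ℝ with δ(g) = 0 such that the discrete Schrödinger operator H_g has SULE. -/

import Mathlib

/-!
Let the values `g n` be independent, `g 0` uniform on `[50, 75]` and every other `g n` uniform on
`[0, 25]`. Then `25 ≤ |g n - g 0| ≤ 75` for `n ≠ 0`, which makes `δ(g)` vanish for every
realization, and it remains to localize one realization. A Dirichlet eigenfunction `φ` of `H_g` on a
box coincides, up to factors, with the half-line solutions started at the two ends of the box. The
ratios of successive values of these solutions obey a Riccati recursion, so the `1/2`-moment of
`|φ y / φ x|`, with the energy fixed and the value at `x` left out, is exponentially small as soon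
as the density of the law is below `1/16`. Averaging over `g x` (spectral averaging) turns the fixed
energy into the random eigenvalues. A union bound weighted by a summable `w` then yields, for each
box, a realization in which every normalized eigenfunction with `w x ≤ φ x ^ 2` decays
exponentially from `x`, with prefactor a power of `(w x)⁻¹`.

Since `∑ x, w x = 1`, every eigenfunction has such a centre `x`, and by Parseval at most
`(w x)⁻¹` of them share it. Indexing the eigenfunctions by centre and multiplicity gives all boxes a
common index set and a common square-summable dominating function, so that potentials, eigenvalues
and eigenfunctions converge together along an ultrafilter of boxes. Dominated convergence preserves
orthogonality, Parseval's identity and the dichotomy between normalized and zero eigenfunctions. The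
nonzero limits are the SULE basis.
-/

noncomputable section

open Filter Real

def distToInt (x : ℝ) : ℝ := |x - round x|

def IsDiophantine (α : ℝ) : Prop :=
  ∃ κ τ : ℝ, 0 < κ ∧ 0 < τ ∧ ∀ k : ℤ, k ≠ 0 → τ / |(k : ℝ)| ^ κ ≤ distToInt (k * α)

def deltaPhase (α θ : ℝ) : ℝ :=
  limsup (fun n : ℤ => -Real.log (distToInt (2 * θ + n * α)) / |(n : ℝ)|) cofinite

def amoPot (lam α θ : ℝ) : ℤ → ℝ := fun n => 2 * lam * Real.cos (2 * Real.pi * (θ + n * α))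

def IsEigenfunction (g : ℤ → ℝ) (E : ℝ) (φ : ℤ → ℝ) : Prop :=
  ∀ n : ℤ, φ (n + 1) + φ (n - 1) + g n * φ n = E * φ n

def deltaPot (g : ℤ → ℝ) : ℝ :=
  limsup (fun n : ℤ => -Real.log (⨆ m : ℤ, |g (n - m) - g m|) / |(n : ℝ)|) cofinite

def matNorm (M : Matrix (Fin 2) (Fin 2) ℝ) : ℝ := ⨆ p : Fin 2 × Fin 2, |M p.1 p.2|

def transfer (g : ℤ → ℝ) (E : ℝ) : ℕ → ℤ → Matrix (Fin 2) (Fin 2) ℝ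
  | 0, _ => 1
  | n + 1, k => !![E - g (k + n), -1; 1, 0] * transfer g E n k

def LyapSup (g : ℤ → ℝ) (E : ℝ) : ℝ :=
  limsup (fun n : ℕ => ⨆ k : ℤ, Real.log (matNorm (transfer g E n k)) / n) atTop

def HasSULE (g : ℤ → ℝ) : Prop :=
  ∃ (Φ : HilbertBasis ℕ ℝ (lp (fun _ : ℤ => ℝ) 2)) (ns : ℕ → ℤ) (γ : ℝ),
    0 < γ ∧
    (∀ s : ℕ, ∃ E : ℝ, IsEigenfunction g E (fun n => Φ s n)) ∧
    ∀ ε : ℝ, 0 < ε → ∃ C : ℝ,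
      ∀ (s : ℕ) (n : ℤ),
        |Φ s n| ≤ C * Real.exp (ε * |(ns s : ℝ)|) * Real.exp (-γ * |(n : ℝ) - (ns s : ℝ)|)

section Subexponential

lemma hasSum_pow_natAbs {r : ℝ} (hr₀ : 0 ≤ r) (hr₁ : r < 1) :
    HasSum (fun n : ℤ => r ^ n.natAbs) ((1 + r) / (1 - r)) := by
  have h := hasSum_geometric_of_lt_one hr₀ hr₁
  have hneg : HasSum (fun n : ℕ => r ^ (-(n + 1 : ℤ)).natAbs) (r * (1 - r)⁻¹) := by
    refine (h.mul_left r).congr_fun fun n => ?_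
    rw [← pow_succ', show (-(n + 1 : ℤ)).natAbs = n + 1 by omega]
  rw [show (1 + r) / (1 - r) = (1 - r)⁻¹ + r * (1 - r)⁻¹ by ring]
  exact HasSum.of_nat_of_neg_add_one (f := fun n : ℤ => r ^ n.natAbs) h hneg

lemma hasSum_pow_natAbs_sub {r : ℝ} (hr₀ : 0 ≤ r) (hr₁ : r < 1) (x : ℤ) :
    HasSum (fun y : ℤ => r ^ (x - y).natAbs) ((1 + r) / (1 - r)) :=
  (Equiv.subLeft x).hasSum_iff (f := fun n : ℤ => r ^ n.natAbs) |>.mpr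
    (hasSum_pow_natAbs hr₀ hr₁)

lemma pow_natAbs_sub_eq_exp {r : ℝ} (hr : 0 < r) (x y : ℤ) :
    r ^ (x - y).natAbs = exp (log r * |(y : ℝ) - x|) := by
  rw [← exp_log hr, ← exp_nat_mul, log_exp, Nat.cast_natAbs, abs_sub_comm]
  push_cast
  ring_nf

lemma summable_exp_neg_mul_abs_sub {γ : ℝ} (hγ : 0 < γ) (x : ℤ) :
    Summable fun y : ℤ => exp (-γ * |(y : ℝ) - x|) := by
  have hr : exp (-γ) < 1 := exp_lt_one_iff.mpr (neg_lt_zero.mpr hγ)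
  refine (hasSum_pow_natAbs_sub (exp_nonneg (-γ)) hr x).summable.congr fun y => ?_
  rw [pow_natAbs_sub_eq_exp (exp_pos _), log_exp]

lemma sq_mul_exp_neg_mul (a γ t : ℝ) : (a * exp (-γ * t)) ^ 2 = a ^ 2 * exp (-(2 * γ) * t) := by
  rw [mul_pow, ← exp_nat_mul]
  push_cast
  ring_nf

lemma summable_sq_mul_exp_neg_mul_abs_sub (a : ℝ) {γ : ℝ} (hγ : 0 < γ) (x : ℤ) :
    Summable fun y : ℤ => (a * exp (-γ * |(y : ℝ) - x|)) ^ 2 := by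
  simp only [sq_mul_exp_neg_mul]
  exact (summable_exp_neg_mul_abs_sub (by positivity) x).mul_left _

/-- Growth slower than every exponential, the growth allowed to the prefactors of the eigenfunctions
in SULE. -/
def IsSubexponential (f : ℤ → ℝ) : Prop :=
  ∀ ε > 0, ∃ C, ∀ x : ℤ, f x ≤ C * exp (ε * |(x : ℝ)|)

namespace IsSubexponential

variable {f g : ℤ → ℝ}

lemma mono (hf : IsSubexponential f) (hgf : ∀ x, g x ≤ f x) : IsSubexponential g := fun ε hε =>
  let ⟨C, hC⟩ := hf ε hε
  ⟨C, fun x => (hgf x).trans (hC x)⟩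

lemma const_mul (hf : IsSubexponential f) {c : ℝ} (hc : 0 ≤ c) :
    IsSubexponential fun x => c * f x := fun ε hε =>
  let ⟨C, hC⟩ := hf ε hε
  ⟨c * C, fun x => by rw [mul_assoc]; exact mul_le_mul_of_nonneg_left (hC x) hc⟩

lemma mul (hf : IsSubexponential f) (hg : IsSubexponential g) (hf₀ : ∀ x, 0 ≤ f x)
    (hg₀ : ∀ x, 0 ≤ g x) : IsSubexponential fun x => f x * g x := by
  intro ε hε
  obtain ⟨C, hC⟩ := hf (ε / 2) (by positivity)
  obtain ⟨C', hC'⟩ := hg (ε / 2) (by positivity)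
  refine ⟨C * C', fun x => (mul_le_mul (hC x) (hC' x) (hg₀ x) ((hf₀ x).trans (hC x))).trans_eq ?_⟩
  rw [mul_mul_mul_comm, ← exp_add]
  ring_nf

lemma pow (hf : IsSubexponential f) (hf₀ : ∀ x, 0 ≤ f x) {k : ℕ} (hk : k ≠ 0) :
    IsSubexponential fun x => f x ^ k := by
  intro ε hε
  obtain ⟨C, hC⟩ := hf (ε / k) (by positivity)
  refine ⟨C ^ k, fun x => (pow_le_pow_left₀ (hf₀ x) (hC x) k).trans_eq ?_⟩
  rw [mul_pow, ← exp_nat_mul]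
  field_simp

lemma summable_mul_exp (hf : IsSubexponential f) (hf₀ : ∀ x, 0 ≤ f x) {γ : ℝ} (hγ : 0 < γ)
    (y : ℤ) : Summable fun x : ℤ => f x * exp (-γ * |(y : ℝ) - x|) := by
  obtain ⟨C, hC⟩ := hf (γ / 2) (by positivity)
  have hC₀ : 0 ≤ C := by simpa using (hf₀ 0).trans (hC 0)
  refine .of_nonneg_of_le (fun x => mul_nonneg (hf₀ x) (exp_nonneg _)) (fun x => ?_)
    ((summable_exp_neg_mul_abs_sub (half_pos hγ) y).mul_left (C * exp (γ / 2 * |(y : ℝ)|)))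
  have hxy : |(x : ℝ)| ≤ |(y : ℝ)| + |(y : ℝ) - x| := by
    simpa using abs_sub (y : ℝ) (y - x)
  calc f x * exp (-γ * |(y : ℝ) - x|)
      ≤ C * exp (γ / 2 * |(x : ℝ)|) * exp (-γ * |(y : ℝ) - x|) := by gcongr; exact hC x
    _ ≤ C * exp (γ / 2 * (|(y : ℝ)| + |(y : ℝ) - x|)) * exp (-γ * |(y : ℝ) - x|) := by gcongr
    _ = C * exp (γ / 2 * |(y : ℝ)|) * exp (-(γ / 2) * |(x : ℝ) - y|) := by
        rw [mul_assoc, mul_assoc, ← exp_add, ← exp_add, abs_sub_comm (x : ℝ)]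
        ring_nf

end IsSubexponential

lemma isSubexponential_one_add_sq : IsSubexponential fun x => 1 + (x : ℝ) ^ 2 := by
  intro ε hε
  refine ⟨1 + 2 / ε ^ 2, fun x => ?_⟩
  have ht : 0 ≤ ε * |(x : ℝ)| := by positivity
  have hsq : (x : ℝ) ^ 2 = 2 / ε ^ 2 * ((ε * |(x : ℝ)|) ^ 2 / 2) := by
    rw [mul_pow, sq_abs]
    field_simp
  have hexp := quadratic_le_exp_of_nonneg ht
  change 1 + (x : ℝ) ^ 2 ≤ _
  rw [hsq, add_mul]
  gcongr <;> nlinarith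

lemma exists_hasSum_one_isSubexponential_inv :
    ∃ w : ℤ → ℝ, (∀ x, 0 < w x) ∧ HasSum w 1 ∧ IsSubexponential fun x => (w x)⁻¹ := by
  have hv₀ : ∀ x : ℤ, 0 < (1 + (x : ℝ) ^ 2)⁻¹ := fun x => by positivity
  have hv : Summable fun x : ℤ => (1 + (x : ℝ) ^ 2)⁻¹ := by
    refine .of_norm_bounded_eventually (summable_one_div_int_pow.mpr one_lt_two) ?_
    filter_upwards [Set.finite_singleton (0 : ℤ) |>.compl_mem_cofinite] with x hx
    have : (0 : ℝ) < (x : ℝ) ^ 2 := by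
      have : (x : ℝ) ≠ 0 := by exact_mod_cast hx
      positivity
    rw [Real.norm_of_nonneg (hv₀ x).le, one_div]
    gcongr
    linarith
  have hT : 0 < ∑' x : ℤ, (1 + (x : ℝ) ^ 2)⁻¹ := hv.tsum_pos (fun x => (hv₀ x).le) 0 (hv₀ 0)
  refine ⟨fun x => (1 + (x : ℝ) ^ 2)⁻¹ / ∑' x : ℤ, (1 + (x : ℝ) ^ 2)⁻¹, fun x => div_pos (hv₀ x) hT,
    ?_, ?_⟩
  · have h := hv.hasSum.div_const (∑' x : ℤ, (1 + (x : ℝ) ^ 2)⁻¹)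
    rwa [div_self hT.ne'] at h
  · simpa [div_eq_mul_inv] using isSubexponential_one_add_sq.const_mul hT.le

end Subexponential

section DirichletPolynomials

open Polynomial

variable {R : Type*} [CommRing R]

/-- The solution of `u (j + 1) + u (j - 1) + p j * u j = E * u j` on the half-line with `u 0 = 0`
and `u 1 = 1`, as a polynomial in the energy `E`. -/
def dirichletPoly (p : ℕ → R) : ℕ → R[X]
  | 0 => 0
  | 1 => 1
  | j + 2 => (X - C (p (j + 1))) * dirichletPoly p (j + 1) - dirichletPoly p j

@[simp]
lemma dirichletPoly_zero (p : ℕ → R) : dirichletPoly p 0 = 0 := rfl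

@[simp]
lemma dirichletPoly_one (p : ℕ → R) : dirichletPoly p 1 = 1 := rfl

lemma eval_dirichletPoly_add_two (p : ℕ → R) (E : R) (j : ℕ) :
    (dirichletPoly p (j + 2)).eval E =
      (E - p (j + 1)) * (dirichletPoly p (j + 1)).eval E - (dirichletPoly p j).eval E := by
  simp [dirichletPoly]

lemma dirichletPoly_congr {p p' : ℕ → R} (j : ℕ) (h : ∀ i, 0 < i → i < j → p i = p' i) :
    dirichletPoly p j = dirichletPoly p' j := by
  induction j using Nat.twoStepInduction with
  | zero | one => rfl
  | more j ih₀ ih₁ =>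
    rw [dirichletPoly, dirichletPoly, h (j + 1) (by omega) (by omega),
      ih₀ fun i h₀ hi => h i h₀ (by omega), ih₁ fun i h₀ hi => h i h₀ (by omega)]

lemma dirichletPoly_update_comp {ι : Type*} [DecidableEq ι] {s : ℕ → ι} (hs : s.Injective)
    (q : ι → R) (v : R) {j k : ℕ} (hj : j ≤ k) :
    dirichletPoly (Function.update q (s k) v ∘ s) j = dirichletPoly (q ∘ s) j :=
  dirichletPoly_congr j fun i _ hi => by
    simp [Function.update_of_ne (hs.ne (by omega : i ≠ k))]

lemma wronskian_dirichletPoly (p : ℕ → R) (j : ℕ) :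
    derivative (dirichletPoly p (j + 1)) * dirichletPoly p j -
      dirichletPoly p (j + 1) * derivative (dirichletPoly p j) =
    ∑ i ∈ Finset.range (j + 1), dirichletPoly p i ^ 2 := by
  induction j with
  | zero => simp
  | succ j ih =>
    rw [Finset.sum_range_succ, ← ih, dirichletPoly]
    simp only [derivative_sub, derivative_mul, derivative_X, derivative_C]
    ring

lemma eq_mul_eval_dirichletPoly {p f : ℕ → R} {E : R} {n : ℕ} (h₀ : f 0 = 0)
    (hf : ∀ j < n, f (j + 2) = (E - p (j + 1)) * f (j + 1) - f j) {j : ℕ} (hj : j ≤ n + 1) :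
    f j = f 1 * (dirichletPoly p j).eval E := by
  induction j using Nat.twoStepInduction with
  | zero | one => simp [h₀]
  | more j ih₀ ih₁ =>
    rw [hf j (by omega), ih₀ (by omega), ih₁ (by omega), eval_dirichletPoly_add_two]
    ring

lemma continuous_eval_dirichletPoly {α : Type*} [TopologicalSpace α] [TopologicalSpace R]
    [IsTopologicalRing R] {p : α → ℕ → R} {E : α → R} (hp : Continuous p) (hE : Continuous E)
    (j : ℕ) : Continuous fun a => (dirichletPoly (p a) j).eval (E a) := by
  induction j using Nat.twoStepInduction with
  | zero | one => simpa using continuous_const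
  | more j ih₀ ih₁ =>
    simp only [eval_dirichletPoly_add_two]
    fun_prop

lemma hasDerivAt_eval_dirichletPoly_div (p : ℕ → ℝ) {E : ℝ} {k : ℕ}
    (hk : (dirichletPoly p (k + 1)).eval E ≠ 0) :
    HasDerivAt (fun e => (dirichletPoly p k).eval e / (dirichletPoly p (k + 1)).eval e)
      (-∑ i ∈ Finset.range (k + 1),
        ((dirichletPoly p i).eval E / (dirichletPoly p (k + 1)).eval E) ^ 2) E := by
  refine (((dirichletPoly p k).hasDerivAt E).div
    ((dirichletPoly p (k + 1)).hasDerivAt E) hk).congr_deriv ?_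
  have hW := congrArg (eval E) (wronskian_dirichletPoly p k)
  simp only [eval_sub, eval_mul, eval_finsetSum, eval_pow] at hW
  simp only [div_pow, ← Finset.sum_div, ← hW]
  ring

end DirichletPolynomials

section Box

/-- The `j`-th site met when walking into the box `[a, b]` from its left end (`false`) or from its
right end (`true`), starting at `j = 0` with the neighbour of the box. -/
def ray (a b : ℤ) : Bool → ℕ → ℤ
  | false, j => a - 1 + j
  | true, j => b + 1 - j

/-- The number of sites of the box `[a, b]` strictly between `x` and the left (`false`) or the right
(`true`) end. -/
def depth (a b x : ℤ) : Bool → ℕ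
  | false => (x - a).toNat
  | true => (b - x).toNat

variable {a b x : ℤ}

lemma ray_injective (a b : ℤ) (side : Bool) : Function.Injective (ray a b side) := by
  intro i j h
  cases side <;> simp only [ray] at h <;> omega

lemma ray_zero_notMem (a b : ℤ) (side : Bool) : ray a b side 0 ∉ Finset.Icc a b := by
  cases side <;> simp [ray]

lemma ray_add_one_mem {side : Bool} {j : ℕ} (hj : j ≤ b - a) :
    ray a b side (j + 1) ∈ Finset.Icc a b := by
  cases side <;> simp only [ray, Finset.mem_Icc] <;> omega

lemma depth_le (hx : x ∈ Finset.Icc a b) (side : Bool) : depth a b x side ≤ b - a := by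
  rw [Finset.mem_Icc] at hx
  cases side <;> simp only [depth] <;> omega

lemma ray_depth_add_one (hx : x ∈ Finset.Icc a b) (side : Bool) :
    ray a b side (depth a b x side + 1) = x := by
  rw [Finset.mem_Icc] at hx
  cases side <;> simp only [ray, depth] <;> omega

lemma dirichletPoly_update_comp_ray (hx : x ∈ Finset.Icc a b) (q : ℤ → ℝ) (v : ℝ) {side : Bool}
    {j : ℕ} (hj : j ≤ depth a b x side + 1) :
    dirichletPoly (Function.update q x v ∘ ray a b side) j =
      dirichletPoly (q ∘ ray a b side) j := by
  simpa only [ray_depth_add_one hx] using dirichletPoly_update_comp (ray_injective a b side) q v hj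

lemma add_ray_neighbours (f : ℤ → ℝ) (side : Bool) (j : ℕ) :
    f (ray a b side (j + 1) + 1) + f (ray a b side (j + 1) - 1) =
      f (ray a b side (j + 2)) + f (ray a b side j) := by
  cases side
  · rw [show ray a b false (j + 1) + 1 = ray a b false (j + 2) by simp only [ray]; omega,
      show ray a b false (j + 1) - 1 = ray a b false j by simp only [ray]; omega]
  · rw [show ray a b true (j + 1) + 1 = ray a b true j by simp only [ray]; omega,
      show ray a b true (j + 1) - 1 = ray a b true (j + 2) by simp only [ray]; omega, add_comm]

lemma add_neighbours_eq_sum_ray_depth (f : ℤ → ℝ) (hx : x ∈ Finset.Icc a b) :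
    f (x + 1) + f (x - 1) = ∑ side, f (ray a b side (depth a b x side)) := by
  rw [Finset.mem_Icc] at hx
  rw [Fintype.sum_bool]
  congr 2 <;> simp only [ray, depth] <;> omega

lemma sum_Icc_eq_add_sum_ray {f : ℤ → ℝ} (hf : ∀ n ∉ Finset.Icc a b, f n = 0)
    (hx : x ∈ Finset.Icc a b) :
    ∑ n ∈ Finset.Icc a b, f n =
      f x + ∑ side, ∑ j ∈ Finset.range (depth a b x side + 1), f (ray a b side j) := by
  rw [Finset.mem_Icc] at hx
  have hleft : ∑ j ∈ Finset.range (depth a b x false + 1), f (ray a b false j) =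
      ∑ n ∈ Finset.Icc (a - 1) (x - 1), f n := by
    refine Finset.sum_nbij' (ray a b false) (fun n => (n - a + 1).toNat) ?_ ?_ ?_ ?_ fun _ _ => rfl
    all_goals simp only [ray, depth, Finset.mem_range, Finset.mem_Icc]; intros; omega
  have hright : ∑ j ∈ Finset.range (depth a b x true + 1), f (ray a b true j) =
      ∑ n ∈ Finset.Icc (x + 1) (b + 1), f n := by
    refine Finset.sum_nbij' (ray a b true) (fun n => (b + 1 - n).toNat) ?_ ?_ ?_ ?_ fun _ _ => rfl
    all_goals simp only [ray, depth, Finset.mem_range, Finset.mem_Icc]; intros; omega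
  have hbox : ∑ n ∈ Finset.Icc a b, f n = ∑ n ∈ Finset.Icc (a - 1) (b + 1), f n :=
    Finset.sum_subset (Finset.Icc_subset_Icc (by omega) (by omega)) fun n _ hn => hf n hn
  have hunion : Finset.Icc (a - 1) (b + 1) =
      insert x (Finset.Icc (x + 1) (b + 1) ∪ Finset.Icc (a - 1) (x - 1)) := by
    ext n
    simp only [Finset.mem_insert, Finset.mem_union, Finset.mem_Icc]
    omega
  rw [Fintype.sum_bool, hleft, hright, hbox, hunion, Finset.sum_insert (by simp),
    Finset.sum_union]
  rw [Finset.disjoint_left]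
  intro n
  simp only [Finset.mem_Icc]
  omega

/-- `φ` is a normalized eigenfunction with energy `E` of the restriction of `H_q` to the box
`[a, b]` with Dirichlet boundary conditions, extended by zero. -/
structure IsDirichletEigenpair (q : ℤ → ℝ) (a b : ℤ) (E : ℝ) (φ : ℤ → ℝ) : Prop where
  eq_zero : ∀ n ∉ Finset.Icc a b, φ n = 0
  eigen_eq : ∀ n ∈ Finset.Icc a b, φ (n + 1) + φ (n - 1) + q n * φ n = E * φ n
  sum_sq : ∑ n ∈ Finset.Icc a b, φ n ^ 2 = 1

lemma isClosed_setOf_isDirichletEigenpair (a b : ℤ) :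
    IsClosed {z : ℝ × (ℤ → ℝ) × (ℤ → ℝ) | IsDirichletEigenpair z.2.2 a b z.1 z.2.1} := by
  have hset : {z : ℝ × (ℤ → ℝ) × (ℤ → ℝ) | IsDirichletEigenpair z.2.2 a b z.1 z.2.1} =
      (⋂ n ∉ Finset.Icc a b, {z | z.2.1 n = 0}) ∩
      (⋂ n ∈ Finset.Icc a b,
        {z | z.2.1 (n + 1) + z.2.1 (n - 1) + z.2.2 n * z.2.1 n = z.1 * z.2.1 n}) ∩
      {z | ∑ n ∈ Finset.Icc a b, z.2.1 n ^ 2 = 1} := by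
    ext z
    simp only [Set.mem_inter_iff, Set.mem_iInter, Set.mem_ofPred_eq, and_assoc]
    exact ⟨fun h => ⟨h.eq_zero, h.eigen_eq, h.sum_sq⟩, fun h => ⟨h.1, h.2.1, h.2.2⟩⟩
  rw [hset]
  refine .inter (.inter (isClosed_biInter fun n _ => ?_) (isClosed_biInter fun n _ => ?_)) ?_
  all_goals exact isClosed_eq (by fun_prop) (by fun_prop)

namespace IsDirichletEigenpair

variable {q φ : ℤ → ℝ} {E : ℝ}

lemma abs_le_one (h : IsDirichletEigenpair q a b E φ) (n : ℤ) : |φ n| ≤ 1 := by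
  by_cases hn : n ∈ Finset.Icc a b
  · rw [← sq_le_one_iff_abs_le_one, ← h.sum_sq]
    exact Finset.single_le_sum (f := fun n => φ n ^ 2) (fun i _ => sq_nonneg _) hn
  · simp [h.eq_zero n hn]

lemma mem_Icc_of_ne_zero (h : IsDirichletEigenpair q a b E φ) {n : ℤ} (hn : φ n ≠ 0) :
    n ∈ Finset.Icc a b :=
  not_imp_comm.mp (h.eq_zero n) hn

lemma energy_mem_Icc (h : IsDirichletEigenpair q a b E φ) {lo hi : ℝ}
    (hq : ∀ n, q n ∈ Set.Icc lo hi) : E ∈ Set.Icc (lo - 2) (hi + 2) := by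
  have hne : (Finset.Icc a b).Nonempty := by
    by_contra hempty
    have := h.sum_sq
    simp [Finset.not_nonempty_iff_eq_empty.mp hempty] at this
  obtain ⟨n, hn, hmax⟩ := (Finset.Icc a b).exists_max_image (|φ ·|) hne
  have hle : ∀ m, |φ m| ≤ |φ n| := fun m => by
    by_cases hm : m ∈ Finset.Icc a b
    · exact hmax m hm
    · simp [h.eq_zero m hm]
  have hpos : 0 < |φ n| := by
    refine (abs_nonneg _).lt_of_ne fun h₀ => ?_
    have hφ : ∀ m, φ m = 0 := fun m => abs_nonpos_iff.mp (h₀ ▸ hle m)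
    simpa [hφ] using h.sum_sq
  have hbound : |E - q n| * |φ n| ≤ 2 * |φ n| := by
    rw [← abs_mul, show (E - q n) * φ n = φ (n + 1) + φ (n - 1) by
      linear_combination -h.eigen_eq n hn]
    linarith [abs_add_le (φ (n + 1)) (φ (n - 1)), hle (n + 1), hle (n - 1)]
  have hEq := abs_le.mp (le_of_mul_le_mul_right hbound hpos)
  constructor <;> linarith [(hq n).1, (hq n).2]

lemma apply_ray (h : IsDirichletEigenpair q a b E φ) {side : Bool} {j : ℕ} (hj : j ≤ b - a + 1) :
    φ (ray a b side j) = φ (ray a b side 1) * (dirichletPoly (q ∘ ray a b side) j).eval E := by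
  refine eq_mul_eval_dirichletPoly (f := φ ∘ ray a b side) (n := j) (h.eq_zero _
    (ray_zero_notMem a b side)) (fun i hi => ?_) (Nat.le_succ j)
  have heq := h.eigen_eq _ (ray_add_one_mem (side := side) (j := i) (by omega))
  rw [add_ray_neighbours] at heq
  simp only [Function.comp_apply]
  linear_combination heq

lemma eval_dirichletPoly_ne_zero (h : IsDirichletEigenpair q a b E φ) (hφ : φ x ≠ 0)
    (side : Bool) :
    (dirichletPoly (q ∘ ray a b side) (depth a b x side + 1)).eval E ≠ 0 := fun h₀ => hφ <| by
  have hx := h.mem_Icc_of_ne_zero hφ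
  have hdepth := depth_le hx side
  rw [← ray_depth_add_one hx side, h.apply_ray (by push_cast; omega), h₀, mul_zero]

lemma apply_ray_eq_mul_div (h : IsDirichletEigenpair q a b E φ) (hφ : φ x ≠ 0) {side : Bool}
    {j : ℕ} (hj : j ≤ depth a b x side + 1) :
    φ (ray a b side j) = φ x * ((dirichletPoly (q ∘ ray a b side) j).eval E /
      (dirichletPoly (q ∘ ray a b side) (depth a b x side + 1)).eval E) := by
  have hx := h.mem_Icc_of_ne_zero hφ
  have hdepth := depth_le hx side
  have hφx := h.apply_ray (side := side) (j := depth a b x side + 1) (by push_cast; omega)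
  rw [ray_depth_add_one hx] at hφx
  rw [h.apply_ray (by omega), hφx]
  field_simp [h.eval_dirichletPoly_ne_zero hφ side]

end IsDirichletEigenpair

end Box

section FractionalMoment

open MeasureTheory
open scoped ENNReal NNReal

lemma setLIntegral_Icc_enorm_rpow_neg_half {δ : ℝ} (hδ : 0 ≤ δ) :
    ∫⁻ v in Set.Icc 0 δ, ‖v‖ₑ ^ (-(1 / 2) : ℝ) = ENNReal.ofReal (2 * √δ) := by
  have hint : IntegrableOn (fun v : ℝ => v ^ (-(1 / 2) : ℝ)) (Set.Ioc 0 δ) :=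
    (intervalIntegrable_iff_integrableOn_Ioc_of_le hδ).mp
      (intervalIntegral.intervalIntegrable_rpow' (by norm_num))
  have hpos : 0 ≤ᵐ[volume.restrict (Set.Ioc 0 δ)] fun v : ℝ => v ^ (-(1 / 2) : ℝ) := by
    filter_upwards [ae_restrict_mem measurableSet_Ioc] with v hv using rpow_nonneg hv.1.le _
  have hcongr : ∀ v ∈ Set.Ioc 0 δ, ‖v‖ₑ ^ (-(1 / 2) : ℝ) = ENNReal.ofReal (v ^ (-(1 / 2) : ℝ)) :=
    fun v hv => by rw [Real.enorm_of_nonneg hv.1.le, ENNReal.ofReal_rpow_of_pos hv.1]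
  rw [setLIntegral_congr Ioc_ae_eq_Icc.symm, setLIntegral_congr_fun measurableSet_Ioc hcongr,
    ← ofReal_integral_eq_lintegral_ofReal hint hpos, ← intervalIntegral.integral_of_le hδ,
    integral_rpow (Or.inl (by norm_num)), sqrt_eq_rpow]
  congr 1
  norm_num
  ring

lemma setLIntegral_closedBall_enorm_sub_rpow_neg_half_le (e : ℝ) {δ : ℝ} (hδ : 0 ≤ δ) :
    ∫⁻ v in Metric.closedBall e δ, ‖v - e‖ₑ ^ (-(1 / 2) : ℝ) ≤ ENNReal.ofReal (4 * √δ) := by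
  have hneg : ∫⁻ v in Set.Icc (-δ) 0, ‖v‖ₑ ^ (-(1 / 2) : ℝ) =
      ∫⁻ v in Set.Icc 0 δ, ‖v‖ₑ ^ (-(1 / 2) : ℝ) := by
    rw [← (Measure.measurePreserving_neg (volume : Measure ℝ)).setLIntegral_comp_preimage_emb
      (Homeomorph.neg ℝ).measurableEmbedding]
    simp
  have hball : (fun v => v - e) ⁻¹' (Set.Icc (-δ) 0 ∪ Set.Icc 0 δ) = Metric.closedBall e δ := by
    rw [Set.Icc_union_Icc_eq_Icc (by linarith) hδ, Set.preimage_sub_const_Icc,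
      Real.closedBall_eq_Icc]
    ring_nf
  rw [← hball, (measurePreserving_sub_right volume e).setLIntegral_comp_preimage_emb
    (Homeomorph.subRight e).measurableEmbedding fun v : ℝ => ‖v‖ₑ ^ (-(1 / 2) : ℝ)]
  refine (lintegral_union_le _ _ _).trans_eq ?_
  rw [hneg, setLIntegral_Icc_enorm_rpow_neg_half hδ, ← ENNReal.ofReal_add (by positivity)
    (by positivity)]
  ring_nf

variable {K : ℝ≥0}

lemma ne_zero_of_le_smul_volume {μ : Measure ℝ} [IsProbabilityMeasure μ] (hμ : μ ≤ K • volume) :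
    K ≠ 0 := by
  rintro rfl
  simpa using hμ Set.univ

lemma lintegral_enorm_sub_rpow_neg_half_le {μ : Measure ℝ} [IsProbabilityMeasure μ]
    (hμ : μ ≤ K • volume) (e : ℝ) :
    ∫⁻ v, ‖v - e‖ₑ ^ (-(1 / 2) : ℝ) ∂μ ≤ ENNReal.ofReal (4 * √K) := by
  have hK : (0 : ℝ) < K := NNReal.coe_pos.mpr (pos_iff_ne_zero.mpr (ne_zero_of_le_smul_volume hμ))
  set f : ℝ → ℝ≥0∞ := fun v => ‖v - e‖ₑ ^ (-(1 / 2) : ℝ)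
  -- This radius balances the two contributions: both equal `2 * √K`.
  set δ : ℝ := 1 / (4 * K)
  have hδ : 0 < δ := by positivity
  have hsqrt : √δ = 1 / (2 * √K) := by
    rw [sqrt_div zero_le_one, sqrt_mul (by norm_num), sqrt_one, show (4 : ℝ) = 2 ^ 2 by norm_num,
      sqrt_sq zero_le_two]
  have hfar : ∀ v ∈ (Metric.closedBall e δ)ᶜ, f v ≤ ENNReal.ofReal (2 * √K) := fun v hv => by
    have hv : δ < |v - e| := by simpa [Real.dist_eq] using hv
    rw [show 2 * √(K : ℝ) = δ ^ (-(1 / 2) : ℝ) by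
      rw [rpow_neg hδ.le, ← sqrt_eq_rpow, hsqrt]; field_simp, ← ENNReal.ofReal_rpow_of_pos hδ]
    simp only [f, Real.enorm_eq_ofReal_abs, ENNReal.rpow_neg, ENNReal.inv_le_inv]
    gcongr
  have hnear : ∫⁻ v in Metric.closedBall e δ, f v ∂μ ≤ ENNReal.ofReal (2 * √K) :=
    calc ∫⁻ v in Metric.closedBall e δ, f v ∂μ
        ≤ ∫⁻ v in Metric.closedBall e δ, f v ∂(K • volume) :=
          lintegral_mono' (Measure.restrict_mono le_rfl hμ) le_rfl
      _ = K * ∫⁻ v in Metric.closedBall e δ, f v := by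
          rw [Measure.restrict_smul, lintegral_smul_measure, ENNReal.smul_def, smul_eq_mul]
      _ ≤ K * ENNReal.ofReal (4 * √δ) := by
          gcongr; exact setLIntegral_closedBall_enorm_sub_rpow_neg_half_le e hδ.le
      _ = ENNReal.ofReal (2 * √K) := by
          rw [← ENNReal.ofReal_coe_nnreal, ← ENNReal.ofReal_mul hK.le, hsqrt]
          congr 1
          nth_rw 1 [← mul_self_sqrt hK.le]
          field_simp
          norm_num
  calc ∫⁻ v, f v ∂μ
      = ∫⁻ v in Metric.closedBall e δ, f v ∂μ + ∫⁻ v in (Metric.closedBall e δ)ᶜ, f v ∂μ :=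
        (lintegral_add_compl f Metric.isClosed_closedBall.measurableSet).symm
    _ ≤ ENNReal.ofReal (2 * √K) + ENNReal.ofReal (2 * √K) := by
        refine add_le_add hnear ((setLIntegral_mono measurable_const hfar).trans ?_)
        rw [setLIntegral_const]
        exact mul_le_of_le_one_right' prob_le_one
    _ = ENNReal.ofReal (4 * √K) := by
        rw [← ENNReal.ofReal_add (by positivity) (by positivity)]
        ring_nf

lemma lintegral_enorm_linear_rpow_neg_half_le {μ : Measure ℝ} [IsProbabilityMeasure μ]
    (hμ : μ ≤ K • volume) (E u u' : ℝ) :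
    ∫⁻ v, ‖(E - v) * u - u'‖ₑ ^ (-(1 / 2) : ℝ) ∂μ ≤
      ENNReal.ofReal (4 * √K) * ‖u‖ₑ ^ (-(1 / 2) : ℝ) := by
  have hK : (0 : ℝ) < K := NNReal.coe_pos.mpr (pos_iff_ne_zero.mpr (ne_zero_of_le_smul_volume hμ))
  rcases eq_or_ne u 0 with rfl | hu
  · rw [enorm_zero, ENNReal.zero_rpow_of_neg (by norm_num), ENNReal.mul_top]
    · exact le_top
    · exact (ENNReal.ofReal_pos.mpr (by positivity)).ne'
  · have hfactor : ∀ v, ‖(E - v) * u - u'‖ₑ ^ (-(1 / 2) : ℝ) =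
        ‖v - (E - u' / u)‖ₑ ^ (-(1 / 2) : ℝ) * ‖u‖ₑ ^ (-(1 / 2) : ℝ) := fun v => by
      rw [← ENNReal.mul_rpow_of_ne_top enorm_ne_top enorm_ne_top, ← enorm_mul, ← enorm_neg]
      congr 2
      field_simp
      ring
    simp_rw [hfactor]
    rw [lintegral_mul_const _ (by fun_prop)]
    gcongr
    exact lintegral_enorm_sub_rpow_neg_half_le hμ _

/-- The fractional moment `|u r / u k| ^ (1 / 2)` of a ratio of values of the half-line solution. -/
def sqrtRatio (p : ℕ → ℝ) (E : ℝ) (r k : ℕ) : ℝ≥0∞ :=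
  ‖(dirichletPoly p r).eval E‖ₑ ^ (1 / 2 : ℝ) * ‖(dirichletPoly p k).eval E‖ₑ ^ (-(1 / 2) : ℝ)

lemma measurable_sqrtRatio {α : Type*} [MeasurableSpace α] {p : α → ℕ → ℝ} {E : α → ℝ}
    (hp : Measurable p) (hE : Measurable E) (r k : ℕ) :
    Measurable fun a => sqrtRatio (p a) (E a) r k := by
  have hu : ∀ j, Measurable fun a => (dirichletPoly (p a) j).eval (E a) := fun j =>
    (continuous_eval_dirichletPoly (α := (ℕ → ℝ) × ℝ) continuous_fst continuous_snd j).measurable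
      |>.comp (hp.prodMk hE)
  unfold sqrtRatio
  fun_prop

variable {ι : Type*} [DecidableEq ι] {s : ℕ → ι}

lemma lintegral_sqrtRatio_update_le {μ : Measure ℝ} [IsProbabilityMeasure μ]
    (hμ : μ ≤ K • volume) (hs : s.Injective) (q : ι → ℝ) (E : ℝ) {r k : ℕ} (hr : r ≤ k + 1) :
    ∫⁻ v, sqrtRatio (Function.update q (s (k + 1)) v ∘ s) E r (k + 2) ∂μ ≤
      ENNReal.ofReal (4 * √K) * sqrtRatio (q ∘ s) E r (k + 1) := by
  have hvalue : ∀ v, sqrtRatio (Function.update q (s (k + 1)) v ∘ s) E r (k + 2) =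
      ‖(dirichletPoly (q ∘ s) r).eval E‖ₑ ^ (1 / 2 : ℝ) *
        ‖(E - v) * (dirichletPoly (q ∘ s) (k + 1)).eval E -
          (dirichletPoly (q ∘ s) k).eval E‖ₑ ^ (-(1 / 2) : ℝ) := fun v => by
    rw [sqrtRatio, eval_dirichletPoly_add_two, dirichletPoly_update_comp hs q v hr,
      dirichletPoly_update_comp hs q v le_rfl, dirichletPoly_update_comp hs q v k.le_succ,
      Function.comp_apply, Function.update_self]
  simp_rw [hvalue]
  rw [lintegral_const_mul _ (by fun_prop), sqrtRatio, mul_left_comm]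
  gcongr
  exact lintegral_enorm_linear_rpow_neg_half_le hμ _ _ _

lemma lmarginal_sqrtRatio_le {μ : ι → Measure ℝ} [∀ i, IsProbabilityMeasure (μ i)]
    (hμ : ∀ i, μ i ≤ K • volume) (hs : s.Injective) (E : ℝ) (r j : ℕ) (q : ι → ℝ) :
    (∫⋯∫⁻_(Finset.Ico (r + 1) (r + 1 + j)).image s,
      (fun q => sqrtRatio (q ∘ s) E (r + 1) (r + 1 + j)) ∂μ) q ≤ ENNReal.ofReal (4 * √K) ^ j := by
  induction j generalizing q with
  | zero =>
    simp only [add_zero, Finset.Ico_self, Finset.image_empty, lmarginal_empty, pow_zero, sqrtRatio]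
    rw [ENNReal.rpow_neg]
    exact ENNReal.mul_inv_le_one _
  | succ j ih =>
    have hk : s (r + 1 + j) ∉ (Finset.Ico (r + 1) (r + 1 + j)).image s := by simp [hs.eq_iff]
    have hmeas : ∀ k, Measurable fun q : ι → ℝ => sqrtRatio (q ∘ s) E (r + 1) k := fun k =>
      measurable_sqrtRatio (by fun_prop) measurable_const _ _
    have hstep : ∀ q : ι → ℝ, ∫⁻ v, sqrtRatio (Function.update q (s (r + 1 + j)) v ∘ s) E (r + 1)
        (r + 1 + (j + 1)) ∂μ (s (r + 1 + j)) ≤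
          ENNReal.ofReal (4 * √K) * sqrtRatio (q ∘ s) E (r + 1) (r + 1 + j) := fun q => by
      rw [show r + 1 + (j + 1) = r + j + 2 by omega, show r + 1 + j = r + j + 1 by omega]
      exact lintegral_sqrtRatio_update_le (hμ _) hs q E (by omega)
    rw [← add_assoc (r + 1), ← Finset.insert_Ico_right_eq_Ico_add_one (by omega),
      Finset.image_insert, lmarginal_insert' _ (hmeas _) hk]
    calc _ ≤ (∫⋯∫⁻_(Finset.Ico (r + 1) (r + 1 + j)).image s,
          (fun q => ENNReal.ofReal (4 * √K) * sqrtRatio (q ∘ s) E (r + 1) (r + 1 + j)) ∂μ) q :=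
          lmarginal_mono hstep q
      _ = ENNReal.ofReal (4 * √K) * (∫⋯∫⁻_(Finset.Ico (r + 1) (r + 1 + j)).image s,
          (fun q => sqrtRatio (q ∘ s) E (r + 1) (r + 1 + j)) ∂μ) q := by
          simp only [lmarginal]
          exact lintegral_const_mul _ ((hmeas _).comp measurable_updateFinset)
      _ ≤ ENNReal.ofReal (4 * √K) ^ (j + 1) := by
          rw [pow_succ']
          gcongr
          exact ih q

end FractionalMoment

section SpectralAveraging

open MeasureTheory
open scoped ENNReal NNReal

lemma volume_image_setOf_abs_deriv_le (f : ℝ → ℝ) {T : Set ℝ} (hT : MeasurableSet T) (L : ℝ) :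
    volume (f '' {E ∈ T | DifferentiableAt ℝ f E ∧ |deriv f E| ≤ L}) ≤
      ENNReal.ofReal L * volume T := by
  set S := {E ∈ T | DifferentiableAt ℝ f E ∧ |deriv f E| ≤ L}
  have hS : MeasurableSet S := hT.inter <| (measurableSet_of_differentiableAt ℝ f).inter <|
    measurableSet_le (measurable_deriv f).abs measurable_const
  calc volume (f '' S)
      ≤ ∫⁻ E in S, ENNReal.ofReal |(ContinuousLinearMap.toSpanSingleton ℝ (deriv f E)).det| :=
        addHaar_image_le_lintegral_abs_det_fderiv volume hS fun E hE =>
          hE.2.1.hasDerivAt.hasFDerivAt.hasFDerivWithinAt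
    _ ≤ ∫⁻ _ in S, ENNReal.ofReal L := setLIntegral_mono measurable_const fun E hE => by
        simpa using ENNReal.ofReal_le_ofReal hE.2.2
    _ ≤ ENNReal.ofReal L * volume T := by
        rw [setLIntegral_const]
        gcongr
        exact Set.sep_subset _ _

/-- The value of the potential at `x` which turns `E` into a Dirichlet eigenvalue of the box
`[a, b]` when the potential agrees with `q` at the other sites. -/
def siteValue (q : ℤ → ℝ) (a b x : ℤ) (E : ℝ) : ℝ :=
  E - ∑ side, (dirichletPoly (q ∘ ray a b side) (depth a b x side)).eval E /
    (dirichletPoly (q ∘ ray a b side) (depth a b x side + 1)).eval E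

variable {a b x y : ℤ} {q φ : ℤ → ℝ} {E : ℝ}

lemma siteValue_update (hx : x ∈ Finset.Icc a b) (q : ℤ → ℝ) (v : ℝ) :
    siteValue (Function.update q x v) a b x = siteValue q a b x := by
  ext E
  simp only [siteValue, dirichletPoly_update_comp_ray hx q v le_rfl,
    dirichletPoly_update_comp_ray hx q v (Nat.le_succ _)]

namespace IsDirichletEigenpair

lemma siteValue_eq (h : IsDirichletEigenpair q a b E φ) (hφ : φ x ≠ 0) :
    siteValue q a b x E = q x := by
  have hx := h.mem_Icc_of_ne_zero hφ
  have heq := h.eigen_eq x hx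
  simp only [add_neighbours_eq_sum_ray_depth φ hx, h.apply_ray_eq_mul_div hφ (Nat.le_succ _),
    ← Finset.mul_sum] at heq
  refine mul_left_cancel₀ hφ ?_
  rw [siteValue]
  linear_combination -heq

lemma hasDerivAt_siteValue (h : IsDirichletEigenpair q a b E φ) (hφ : φ x ≠ 0) :
    HasDerivAt (siteValue q a b x) (1 / φ x ^ 2) E := by
  have hx := h.mem_Icc_of_ne_zero hφ
  refine ((hasDerivAt_id E).sub <| HasDerivAt.fun_sum fun side _ =>
    hasDerivAt_eval_dirichletPoly_div _ (h.eval_dirichletPoly_ne_zero hφ side)).congr_deriv ?_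
  have hnorm := sum_Icc_eq_add_sum_ray (f := fun n => φ n ^ 2)
    (fun n hn => by simp [h.eq_zero n hn]) hx
  have hray : ∀ side, ∑ j ∈ Finset.range (depth a b x side + 1), φ (ray a b side j) ^ 2 =
      φ x ^ 2 * ∑ j ∈ Finset.range (depth a b x side + 1),
        ((dirichletPoly (q ∘ ray a b side) j).eval E /
          (dirichletPoly (q ∘ ray a b side) (depth a b x side + 1)).eval E) ^ 2 := fun side => by
    rw [Finset.mul_sum]
    refine Finset.sum_congr rfl fun j hj => ?_
    rw [h.apply_ray_eq_mul_div hφ (Finset.mem_range.mp hj).le, mul_pow]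
  simp only [h.sum_sq, hray, ← Finset.mul_sum] at hnorm
  rw [Finset.sum_neg_distrib, eq_div_iff (by positivity)]
  linear_combination -hnorm

end IsDirichletEigenpair

lemma volume_setOf_isDirichletEigenpair_update_le (q : ℤ → ℝ) (a b x : ℤ) {T : Set ℝ}
    (hT : MeasurableSet T) {w : ℝ} (hw : 0 < w) :
    volume {v | ∃ E ∈ T, ∃ φ, IsDirichletEigenpair (Function.update q x v) a b E φ ∧ w ≤ φ x ^ 2} ≤
      ENNReal.ofReal (1 / w) * volume T := by
  refine (measure_mono ?_).trans (volume_image_setOf_abs_deriv_le (siteValue q a b x) hT (1 / w))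
  rintro v ⟨E, hE, φ, h, hφ⟩
  have hφ₀ : φ x ≠ 0 := fun h₀ => by
    rw [h₀] at hφ
    linarith
  have hderiv := h.hasDerivAt_siteValue hφ₀
  have hvalue := h.siteValue_eq hφ₀
  rw [siteValue_update (h.mem_Icc_of_ne_zero hφ₀)] at hderiv hvalue
  refine ⟨E, ⟨hE, hderiv.differentiableAt, ?_⟩, hvalue.trans (Function.update_self ..)⟩
  rw [hderiv.deriv, abs_of_pos (by positivity)]
  gcongr

end SpectralAveraging

section Resonance

open MeasureTheory
open scoped ENNReal NNReal

/-- The potentials having a Dirichlet eigenfunction on `[a, b]`, with energy in `J`, which has mass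
at least `w` at `x` and is not small at `y`. -/
def resonantSet (a b : ℤ) (J : Set ℝ) (x y : ℤ) (w τ : ℝ) : Set (ℤ → ℝ) :=
  {q | ∃ E ∈ J, ∃ φ, IsDirichletEigenpair q a b E φ ∧ w ≤ φ x ^ 2 ∧ τ ^ 2 * |φ x| ≤ |φ y|}

variable {a b x y : ℤ} {q φ : ℤ → ℝ} {E w τ : ℝ} {J : Set ℝ}

lemma isClosed_resonantSet (a b : ℤ) (hJ : IsCompact J) (x y : ℤ) (w τ : ℝ) :
    IsClosed (resonantSet a b J x y w τ) := by
  have hK : IsCompact (J ×ˢ Set.univ.pi fun _ : ℤ => Set.Icc (-1 : ℝ) 1) :=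
    hJ.prod (isCompact_univ_pi fun _ => isCompact_Icc)
  set K := J ×ˢ Set.univ.pi fun _ : ℤ => Set.Icc (-1 : ℝ) 1
  have := isCompact_iff_compactSpace.mp hK
  have hpair : IsClosed {z : K × (ℤ → ℝ) | IsDirichletEigenpair z.2 a b z.1.1.1 z.1.1.2} :=
    (isClosed_setOf_isDirichletEigenpair a b).preimage
      (f := fun z : K × (ℤ → ℝ) => (z.1.1.1, z.1.1.2, z.2)) (by fun_prop)
  have hx : IsClosed {z : K × (ℤ → ℝ) | w ≤ z.1.1.2 x ^ 2} :=
    isClosed_le (by fun_prop) (by fun_prop)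
  have hy : IsClosed {z : K × (ℤ → ℝ) | τ ^ 2 * |z.1.1.2 x| ≤ |z.1.1.2 y|} :=
    isClosed_le (by fun_prop) (by fun_prop)
  convert isClosedMap_snd_of_compactSpace _ (hpair.inter (hx.inter hy)) using 1
  ext q
  constructor
  · rintro ⟨E, hE, φ, h, hφ⟩
    exact ⟨(⟨(E, φ), hE, fun n _ => abs_le.mp (h.abs_le_one n)⟩, q), ⟨h, hφ⟩, rfl⟩
  · rintro ⟨⟨⟨⟨E, φ⟩, hE⟩, q⟩, ⟨h, hφ⟩, rfl⟩
    exact ⟨E, hE.1, φ, h, hφ⟩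

lemma exists_depth_eq_add_natAbs (hx : x ∈ Finset.Icc a b) (hy : y ∈ Finset.Icc a b) :
    ∃ side, depth a b x side = depth a b y side + (x - y).natAbs := by
  rw [Finset.mem_Icc] at hx hy
  rcases le_total y x with h | h
  · exact ⟨false, by simp only [depth]; omega⟩
  · exact ⟨true, by simp only [depth]; omega⟩

lemma IsDirichletEigenpair.ofReal_le_sqrtRatio (h : IsDirichletEigenpair q a b E φ)
    (hφ : φ x ≠ 0) (hy : y ∈ Finset.Icc a b) {side : Bool}
    (hside : depth a b y side ≤ depth a b x side)
    (hτφ : τ ^ 2 * |φ x| ≤ |φ y|) :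
    ENNReal.ofReal τ ≤
      sqrtRatio (q ∘ ray a b side) E (depth a b y side + 1) (depth a b x side + 1) := by
  rw [← ray_depth_add_one hy side, h.apply_ray_eq_mul_div hφ (by omega), abs_mul,
    mul_comm (|φ x|)] at hτφ
  have hratio := le_of_mul_le_mul_right hτφ (abs_pos.mpr hφ)
  rw [sqrtRatio, ENNReal.rpow_neg, ← ENNReal.inv_rpow,
    ← ENNReal.mul_rpow_of_nonneg _ _ (by norm_num), ← div_eq_mul_inv, Real.enorm_eq_ofReal_abs,
    Real.enorm_eq_ofReal_abs, ← ENNReal.ofReal_div_of_pos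
      (abs_pos.mpr (h.eval_dirichletPoly_ne_zero hφ side)), ← abs_div,
    ENNReal.ofReal_rpow_of_nonneg (abs_nonneg _) (by norm_num), ← sqrt_eq_rpow]
  exact ENNReal.ofReal_le_ofReal (le_sqrt_of_sq_le hratio)

variable {K : ℝ≥0}

lemma measure_setOf_update_mem_resonantSet_le {μ : Measure ℝ} (hμ : μ ≤ K • volume)
    (hJ : IsCompact J) (hx : x ∈ Finset.Icc a b) (hy : y ∈ Finset.Icc a b) {side : Bool}
    (hside : depth a b y side ≤ depth a b x side) (hw : 0 < w) (hτ : 0 < τ) (q : ℤ → ℝ) :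
    μ {v | Function.update q x v ∈ resonantSet a b J x y w τ} ≤
      K * ENNReal.ofReal (1 / w) * (ENNReal.ofReal τ)⁻¹ * ∫⁻ E in J,
        sqrtRatio (q ∘ ray a b side) E (depth a b y side + 1) (depth a b x side + 1) := by
  set h : ℝ → ℝ≥0∞ := fun E =>
    sqrtRatio (q ∘ ray a b side) E (depth a b y side + 1) (depth a b x side + 1)
  have hmeas : Measurable h := measurable_sqrtRatio measurable_const measurable_id _ _
  have hsub : {v | Function.update q x v ∈ resonantSet a b J x y w τ} ⊆
      {v | ∃ E ∈ {E ∈ J | ENNReal.ofReal τ ≤ h E}, ∃ φ,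
        IsDirichletEigenpair (Function.update q x v) a b E φ ∧ w ≤ φ x ^ 2} := by
    rintro v ⟨E, hE, φ, hpair, hφ, hτφ⟩
    have hφ₀ : φ x ≠ 0 := fun h₀ => by
      rw [h₀] at hφ
      linarith
    have := hpair.ofReal_le_sqrtRatio hφ₀ hy hside hτφ
    rw [sqrtRatio, dirichletPoly_update_comp_ray hx q v (by omega),
      dirichletPoly_update_comp_ray hx q v le_rfl] at this
    exact ⟨E, ⟨hE, this⟩, φ, hpair, hφ⟩
  have hmarkov : volume {E ∈ J | ENNReal.ofReal τ ≤ h E} ≤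
      (ENNReal.ofReal τ)⁻¹ * ∫⁻ E in J, h E := by
    rw [← ENNReal.div_eq_inv_mul, show {E ∈ J | ENNReal.ofReal τ ≤ h E} =
      {E | ENNReal.ofReal τ ≤ h E} ∩ J from Set.inter_comm _ _,
      ← Measure.restrict_apply (measurableSet_le measurable_const hmeas)]
    exact meas_ge_le_lintegral_div hmeas.aemeasurable (by simpa using hτ) ENNReal.ofReal_ne_top
  calc μ {v | Function.update q x v ∈ resonantSet a b J x y w τ}
      ≤ K * volume {v | Function.update q x v ∈ resonantSet a b J x y w τ} := hμ _
    _ ≤ K * (ENNReal.ofReal (1 / w) * volume {E ∈ J | ENNReal.ofReal τ ≤ h E}) := by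
        gcongr
        exact (measure_mono hsub).trans (volume_setOf_isDirichletEigenpair_update_le q a b x
          (hJ.measurableSet.inter (measurableSet_le measurable_const hmeas)) hw)
    _ ≤ K * (ENNReal.ofReal (1 / w) * ((ENNReal.ofReal τ)⁻¹ * ∫⁻ E in J, h E)) := by gcongr
    _ = K * ENNReal.ofReal (1 / w) * (ENNReal.ofReal τ)⁻¹ * ∫⁻ E in J, h E := by ring

lemma lmarginal_lintegral_swap {ι α : Type*} [DecidableEq ι] [MeasurableSpace α] {ν : Measure α}
    [SFinite ν] {μ : ι → Measure ℝ} [∀ i, SigmaFinite (μ i)] (s : Finset ι)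
    {f : (ι → ℝ) → α → ℝ≥0∞} (hf : Measurable (Function.uncurry f)) (q : ι → ℝ) :
    (∫⋯∫⁻_s, (fun q => ∫⁻ a, f q a ∂ν) ∂μ) q = ∫⁻ a, (∫⋯∫⁻_s, (f · a) ∂μ) q ∂ν := by
  simp only [lmarginal]
  refine lintegral_lintegral_swap (Measurable.aemeasurable ?_)
  exact hf.comp ((measurable_updateFinset.comp measurable_fst).prodMk measurable_snd)

lemma lmarginal_le_of_subset {ι : Type*} [DecidableEq ι] {μ : ι → Measure ℝ}
    [∀ i, IsProbabilityMeasure (μ i)] {s t : Finset ι} (hst : s ⊆ t) {f : (ι → ℝ) → ℝ≥0∞}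
    (hf : Measurable f) {c : ℝ≥0∞} (hc : ∀ q, (∫⋯∫⁻_s, f ∂μ) q ≤ c) (q : ι → ℝ) :
    (∫⋯∫⁻_t, f ∂μ) q ≤ c := by
  rw [← Finset.sdiff_union_of_subset hst, lmarginal_union _ f hf Finset.sdiff_disjoint]
  exact (lmarginal_mono (g := fun _ => c) hc q).trans (by simp [lmarginal])

lemma lmarginal_setLIntegral_sqrtRatio_le {ι : Type*} [DecidableEq ι] {μ : ι → Measure ℝ}
    [∀ i, IsProbabilityMeasure (μ i)] (hμ : ∀ i, μ i ≤ K • volume) {s : ℕ → ι} (hs : s.Injective)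
    (J : Set ℝ) (r j : ℕ) (q : ι → ℝ) :
    (∫⋯∫⁻_(Finset.Ico (r + 1) (r + 1 + j)).image s,
      (fun q => ∫⁻ E in J, sqrtRatio (q ∘ s) E (r + 1) (r + 1 + j)) ∂μ) q ≤
      ENNReal.ofReal (4 * √K) ^ j * volume J := by
  rw [lmarginal_lintegral_swap _ (measurable_sqrtRatio (by fun_prop) measurable_snd _ _)]
  refine (lintegral_mono fun E => lmarginal_sqrtRatio_le hμ hs E r j q).trans_eq ?_
  rw [setLIntegral_const]

lemma insert_image_ray_subset_Icc (hx : x ∈ Finset.Icc a b) (side : Bool) (r : ℕ) :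
    insert x ((Finset.Ico (r + 1) (depth a b x side + 1)).image (ray a b side)) ⊆
      Finset.Icc a b := by
  refine Finset.insert_subset hx fun z hz => ?_
  obtain ⟨j, hj, rfl⟩ := Finset.mem_image.mp hz
  rw [Finset.mem_Ico] at hj
  obtain ⟨i, rfl⟩ := Nat.exists_eq_add_of_le' (le_add_self.trans hj.1)
  have := depth_le hx side
  exact ray_add_one_mem (by omega)

lemma notMem_image_ray_Ico (hx : x ∈ Finset.Icc a b) (side : Bool) (r : ℕ) :
    x ∉ (Finset.Ico r (depth a b x side + 1)).image (ray a b side) := by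
  intro hmem
  obtain ⟨j, hj, hjx⟩ := Finset.mem_image.mp hmem
  rw [← ray_depth_add_one hx side, (ray_injective a b side).eq_iff] at hjx
  simp [hjx] at hj

lemma lmarginal_resonantSet_le {μ : ℤ → Measure ℝ} [∀ i, IsProbabilityMeasure (μ i)]
    (hμ : ∀ i, μ i ≤ K • volume) (hJ : IsCompact J) (hx : x ∈ Finset.Icc a b)
    (hy : y ∈ Finset.Icc a b) (hw : 0 < w) (hτ : 0 < τ) (q : ℤ → ℝ) :
    (∫⋯∫⁻_Finset.Icc a b, (resonantSet a b J x y w τ).indicator 1 ∂μ) q ≤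
      K * ENNReal.ofReal (1 / w) * (ENNReal.ofReal τ)⁻¹ *
        (ENNReal.ofReal (4 * √K) ^ (x - y).natAbs * volume J) := by
  obtain ⟨side, hside⟩ := exists_depth_eq_add_natAbs hx hy
  set r := depth a b y side
  set c := K * ENNReal.ofReal (1 / w) * (ENNReal.ofReal τ)⁻¹
  have hk : depth a b x side + 1 = r + 1 + (x - y).natAbs := by omega
  set s := (Finset.Ico (r + 1) (r + 1 + (x - y).natAbs)).image (ray a b side) with hs
  rw [← hk] at hs
  have hclosed := isClosed_resonantSet a b hJ x y w τ
  have hind : Measurable ((resonantSet a b J x y w τ).indicator 1 : (ℤ → ℝ) → ℝ≥0∞) :=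
    measurable_one.indicator hclosed.measurableSet
  have hsite : ∀ q, ∫⁻ v, (resonantSet a b J x y w τ).indicator 1 (Function.update q x v) ∂μ x ≤
      c * ∫⁻ E in J, sqrtRatio (q ∘ ray a b side) E (r + 1) (r + 1 + (x - y).natAbs) := fun q => by
    rw [← hk]
    refine (lintegral_indicator_one (measurable_update q hclosed.measurableSet)).trans_le ?_
    exact measure_setOf_update_mem_resonantSet_le (hμ x) hJ hx hy (by omega) hw hτ q
  refine lmarginal_le_of_subset (hs ▸ insert_image_ray_subset_Icc hx side r) hind (fun q => ?_) q
  rw [lmarginal_insert' _ hind (hs ▸ notMem_image_ray_Ico hx side _)]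
  calc _ ≤ (∫⋯∫⁻_s, (fun q => c * ∫⁻ E in J,
        sqrtRatio (q ∘ ray a b side) E (r + 1) (r + 1 + (x - y).natAbs)) ∂μ) q :=
        lmarginal_mono hsite q
    _ = c * (∫⋯∫⁻_s, (fun q => ∫⁻ E in J,
        sqrtRatio (q ∘ ray a b side) E (r + 1) (r + 1 + (x - y).natAbs)) ∂μ) q := by
        simp only [lmarginal]
        refine lintegral_const_mul _ (Measurable.lintegral_prod_right ?_)
        exact measurable_sqrtRatio (by fun_prop) measurable_snd _ _
    _ ≤ c * (ENNReal.ofReal (4 * √K) ^ (x - y).natAbs * volume J) := by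
        gcongr
        exact lmarginal_setLIntegral_sqrtRatio_le hμ (ray_injective a b side) J r _ q

end Resonance

section FiniteVolume

open MeasureTheory
open scoped ENNReal NNReal

lemma exists_forall_mem_forall_notMem {ι κ : Type*} [DecidableEq ι] {μ : ι → Measure ℝ}
    [∀ i, IsProbabilityMeasure (μ i)] {S : ι → Set ℝ} (hS : ∀ i, ∀ᵐ v ∂μ i, v ∈ S i) {q₀ : ι → ℝ}
    (hq₀ : ∀ i, q₀ i ∈ S i) (s : Finset ι) (t : Finset κ) {B : κ → Set (ι → ℝ)}
    (hB : ∀ k, MeasurableSet (B k))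
    (hsum : ∑ k ∈ t, (∫⋯∫⁻_s, (B k).indicator 1 ∂μ) q₀ < 1) :
    ∃ q, (∀ i, q i ∈ S i) ∧ ∀ k ∈ t, q ∉ B k := by
  set P := Measure.pi fun i : s => μ i
  set A := fun k => Function.updateFinset q₀ s ⁻¹' B k
  have hA : ∀ k, MeasurableSet (A k) := fun k => measurable_updateFinset (hB k)
  have hbad : P (⋃ k ∈ t, A k) < 1 := by
    refine (measure_biUnion_finset_le t A).trans_lt (lt_of_eq_of_lt ?_ hsum)
    exact Finset.sum_congr rfl fun k _ => (lintegral_indicator_one (hA k)).symm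
  have hgood : ∃ᵐ v ∂P, v ∈ (⋃ k ∈ t, A k)ᶜ := by
    rw [frequently_ae_iff]
    exact fun h => hbad.ne ((prob_compl_eq_zero_iff (t.measurableSet_biUnion fun k _ => hA k)).mp h)
  have hmem : ∀ᵐ v ∂P, ∀ i : s, v i ∈ S i := eventually_all.mpr fun i =>
    Measure.tendsto_eval_ae_ae (μ := fun i : s => μ i) (hS i)
  obtain ⟨v, hv, hvS⟩ := (hgood.and_eventually hmem).exists
  refine ⟨Function.updateFinset q₀ s v, fun i => ?_, fun k hk hBk => hv ?_⟩
  · by_cases hi : i ∈ s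
    · simpa [Function.updateFinset, hi] using hvS ⟨i, hi⟩
    · simpa [Function.updateFinset, hi] using hq₀ i
  · exact Set.mem_biUnion hk hBk

variable {K : ℝ≥0} {J : Set ℝ} {w : ℤ → ℝ} {ρ C : ℝ}

lemma lmarginal_resonantSet_le_ofReal {μ : ℤ → Measure ℝ} [∀ i, IsProbabilityMeasure (μ i)]
    (hμ : ∀ i, μ i ≤ K • volume) (hJ : IsCompact J) {a b x y : ℤ} (hx : x ∈ Finset.Icc a b)
    (hy : y ∈ Finset.Icc a b) {w : ℝ} (hw : 0 < w) (hρ : 0 < ρ) (hK : 4 * √K ≤ ρ ^ 2) (hC : 0 < C)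
    (q : ℤ → ℝ) :
    (∫⋯∫⁻_Finset.Icc a b,
      (resonantSet a b J x y w (C * w⁻¹ ^ 2 * ρ ^ (x - y).natAbs)).indicator 1 ∂μ) q ≤
      ENNReal.ofReal (K * volume.real J / C * (w * ρ ^ (x - y).natAbs)) := by
  have hτ : 0 < C * w⁻¹ ^ 2 * ρ ^ (x - y).natAbs := by positivity
  refine (lmarginal_resonantSet_le hμ hJ hx hy hw hτ q).trans ?_
  rw [← ENNReal.ofReal_coe_nnreal, ← ENNReal.ofReal_inv_of_pos hτ,
    ← ENNReal.ofReal_pow (by positivity), ← ofReal_measureReal hJ.measure_lt_top.ne,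
    ← ENNReal.ofReal_mul (by positivity), ← ENNReal.ofReal_mul (by positivity),
    ← ENNReal.ofReal_mul (by positivity), ← ENNReal.ofReal_mul (by positivity)]
  refine ENNReal.ofReal_le_ofReal ?_
  calc K * (1 / w) * (C * w⁻¹ ^ 2 * ρ ^ (x - y).natAbs)⁻¹ *
        ((4 * √K) ^ (x - y).natAbs * volume.real J)
      ≤ K * (1 / w) * (C * w⁻¹ ^ 2 * ρ ^ (x - y).natAbs)⁻¹ *
        ((ρ ^ 2) ^ (x - y).natAbs * volume.real J) := by gcongr
    _ = K * volume.real J / C * (w * ρ ^ (x - y).natAbs) := by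
        rw [pow_right_comm]
        field_simp

lemma sum_product_mul_pow_natAbs_sub_le (hw : ∀ x, 0 ≤ w x) (hw₁ : HasSum w 1) (hρ : 0 ≤ ρ)
    (hρ₁ : ρ < 1) (s t : Finset ℤ) :
    ∑ k ∈ s ×ˢ t, w k.1 * ρ ^ (k.1 - k.2).natAbs ≤ (1 + ρ) / (1 - ρ) := by
  rw [Finset.sum_product]
  calc ∑ x ∈ s, ∑ y ∈ t, w x * ρ ^ (x - y).natAbs
      ≤ ∑ x ∈ s, w x * ((1 + ρ) / (1 - ρ)) := by
        refine Finset.sum_le_sum fun x _ => ?_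
        rw [← Finset.mul_sum]
        exact mul_le_mul_of_nonneg_left (sum_le_hasSum _ (fun y _ => by positivity)
          (hasSum_pow_natAbs_sub hρ hρ₁ x)) (hw x)
    _ ≤ (1 + ρ) / (1 - ρ) := by
        rw [← Finset.sum_mul]
        exact mul_le_of_le_one_left (div_nonneg (by linarith) (by linarith))
          (sum_le_hasSum _ (fun x _ => hw x) hw₁)

lemma exists_forall_notMem_resonantSet {μ : ℤ → Measure ℝ} [∀ i, IsProbabilityMeasure (μ i)]
    (hμ : ∀ i, μ i ≤ K • volume) {S : ℤ → Set ℝ} (hS : ∀ i, ∀ᵐ v ∂μ i, v ∈ S i)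
    (hJ : IsCompact J) (hw : ∀ x, 0 < w x) (hw₁ : HasSum w 1) (hρ : 0 < ρ) (hρ₁ : ρ < 1)
    (hK : 4 * √K ≤ ρ ^ 2) (hC : K * volume.real J * ((1 + ρ) / (1 - ρ)) < C) (a b : ℤ) :
    ∃ q, (∀ i, q i ∈ S i) ∧ ∀ x ∈ Finset.Icc a b, ∀ y ∈ Finset.Icc a b,
      q ∉ resonantSet a b J x y (w x) (C * (w x)⁻¹ ^ 2 * ρ ^ (x - y).natAbs) := by
  have hC₀ : 0 < C :=
    (mul_nonneg (by positivity) (div_nonneg (by linarith) (by linarith))).trans_lt hC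
  choose q₀ hq₀ using fun i => (hS i).exists
  suffices hsum : ∑ k ∈ Finset.Icc a b ×ˢ Finset.Icc a b,
      (∫⋯∫⁻_Finset.Icc a b, (resonantSet a b J k.1 k.2 (w k.1)
        (C * (w k.1)⁻¹ ^ 2 * ρ ^ (k.1 - k.2).natAbs)).indicator 1 ∂μ) q₀ < 1 by
    have hmeas : ∀ k : ℤ × ℤ, MeasurableSet (resonantSet a b J k.1 k.2 (w k.1)
        (C * (w k.1)⁻¹ ^ 2 * ρ ^ (k.1 - k.2).natAbs)) := fun k =>
      (isClosed_resonantSet a b hJ ..).measurableSet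
    obtain ⟨q, hqS, hq⟩ := exists_forall_mem_forall_notMem hS hq₀ _ _ hmeas hsum
    exact ⟨q, hqS, fun x hx y hy => hq (x, y) (Finset.mk_mem_product hx hy)⟩
  calc _ ≤ ∑ k ∈ Finset.Icc a b ×ˢ Finset.Icc a b,
        ENNReal.ofReal (K * volume.real J / C * (w k.1 * ρ ^ (k.1 - k.2).natAbs)) := by
        refine Finset.sum_le_sum fun k hk => ?_
        rw [Finset.mem_product] at hk
        exact lmarginal_resonantSet_le_ofReal hμ hJ hk.1 hk.2 (hw _) hρ hK hC₀ q₀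
    _ = ENNReal.ofReal (K * volume.real J / C *
          ∑ k ∈ Finset.Icc a b ×ˢ Finset.Icc a b, w k.1 * ρ ^ (k.1 - k.2).natAbs) := by
        rw [Finset.mul_sum, ENNReal.ofReal_sum_of_nonneg fun k _ => ?_]
        have := hw k.1
        positivity
    _ < 1 := by
        rw [ENNReal.ofReal_lt_one]
        refine (mul_le_mul_of_nonneg_left (sum_product_mul_pow_natAbs_sub_le
          (fun x => (hw x).le) hw₁ hρ.le hρ₁ _ _) (by positivity)).trans_lt ?_
        rwa [div_mul_eq_mul_div, div_lt_one hC₀]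

theorem exists_forall_isDirichletEigenpair_abs_le {μ : ℤ → Measure ℝ}
    [∀ i, IsProbabilityMeasure (μ i)] (hμ : ∀ i, μ i ≤ K • volume) {S : ℤ → Set ℝ}
    (hS : ∀ i, ∀ᵐ v ∂μ i, v ∈ S i) (hJ : IsCompact J) (hw : ∀ x, 0 < w x) (hw₁ : HasSum w 1)
    (hρ : 0 < ρ) (hρ₁ : ρ < 1) (hK : 4 * √K ≤ ρ ^ 2)
    (hC : K * volume.real J * ((1 + ρ) / (1 - ρ)) < C) (a b : ℤ) :
    ∃ q, (∀ i, q i ∈ S i) ∧ ∀ E ∈ J, ∀ φ, IsDirichletEigenpair q a b E φ →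
      ∀ x, w x ≤ φ x ^ 2 → ∀ y, |φ y| ≤ (C * (w x)⁻¹ ^ 2 * ρ ^ (x - y).natAbs) ^ 2 := by
  obtain ⟨q, hqS, hq⟩ := exists_forall_notMem_resonantSet hμ hS hJ hw hw₁ hρ hρ₁ hK hC a b
  refine ⟨q, hqS, fun E hE φ h x hx y => ?_⟩
  by_cases hy : φ y = 0
  · rw [hy, abs_zero]
    positivity
  have hφx : φ x ≠ 0 := fun h₀ => by
    rw [h₀] at hx
    linarith [hw x]
  have hlt := not_le.mp fun hle =>
    hq x (h.mem_Icc_of_ne_zero hφx) y (h.mem_Icc_of_ne_zero hy) ⟨E, hE, φ, h, hx, hle⟩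
  exact hlt.le.trans (mul_le_of_le_one_right (by positivity) (h.abs_le_one x))

end FiniteVolume

section Eigenbasis

variable {a b : ℤ}

/-- The matrix of the restriction of `H_q` to the box `[a, b]` with Dirichlet boundary
conditions. -/
def dirichletMatrix (q : ℤ → ℝ) (a b : ℤ) :
    Matrix (Finset.Icc a b) (Finset.Icc a b) ℝ :=
  .of fun i j => (if (j : ℤ) = i + 1 then 1 else 0) + (if (j : ℤ) = i - 1 then 1 else 0) +
    if (j : ℤ) = i then q i else 0

lemma isHermitian_dirichletMatrix (q : ℤ → ℝ) (a b : ℤ) : (dirichletMatrix q a b).IsHermitian := by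
  ext i j
  simp only [dirichletMatrix, Matrix.conjTranspose_apply, Matrix.of_apply, star_trivial]
  obtain rfl | h := eq_or_ne i j
  · rfl
  · rw [if_neg (Subtype.coe_injective.ne h), if_neg (Subtype.coe_injective.ne h.symm),
      add_comm (ite ((i : ℤ) = j + 1) _ _)]
    congr 2 <;> exact if_congr (by omega) rfl rfl

lemma dirichletMatrix_mulVec (q : ℤ → ℝ) {f : ℤ → ℝ} (hf : ∀ n ∉ Finset.Icc a b, f n = 0)
    (n : Finset.Icc a b) :
    (dirichletMatrix q a b).mulVec (fun m => f m) n = f (n + 1) + f (n - 1) + q n * f n := by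
  have hite : ∀ k, (if k ∈ Finset.Icc a b then f k else 0) = f k := fun k =>
    ite_eq_left_iff.mpr fun hk => (hf k hk).symm
  simp only [Matrix.mulVec, dotProduct, dirichletMatrix, Matrix.of_apply]
  rw [Finset.sum_coe_sort (Finset.Icc a b) fun m : ℤ => ((if m = n + 1 then (1 : ℝ) else 0) +
    (if m = n - 1 then 1 else 0) + if m = n then q n else 0) * f m]
  simp only [add_mul, ite_mul, one_mul, zero_mul, Finset.sum_add_distrib, Finset.sum_ite_eq', hite]
  rw [if_pos n.2]

theorem exists_isDirichletEigenpair_basis (q : ℤ → ℝ) (a b : ℤ) :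
    ∃ (E : Finset.Icc a b → ℝ) (ψ : Finset.Icc a b → ℤ → ℝ),
      (∀ s, IsDirichletEigenpair q a b (E s) (ψ s)) ∧
      (Pairwise fun s t => ∑ n ∈ Finset.Icc a b, ψ s n * ψ t n = 0) ∧
      ∀ m ∈ Finset.Icc a b, ∑ s, ψ s m ^ 2 = 1 := by
  have hM := isHermitian_dirichletMatrix q a b
  set u := hM.eigenvectorBasis
  set ψ : Finset.Icc a b → ℤ → ℝ := fun s => Function.extend Subtype.val (u s) 0
  have hψ : ∀ s (n : Finset.Icc a b), ψ s n = u s n := fun s n =>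
    Subtype.val_injective.extend_apply ..
  have hψ₀ : ∀ s, ∀ n ∉ Finset.Icc a b, ψ s n = 0 := fun s n hn =>
    Function.extend_apply' _ _ _ fun ⟨m, hm⟩ => hn (hm ▸ m.2)
  have hinner : ∀ s t, ∑ n ∈ Finset.Icc a b, ψ s n * ψ t n = inner ℝ (u s) (u t) := fun s t => by
    rw [← Finset.sum_coe_sort]
    simp [hψ, PiLp.inner_apply, mul_comm]
  refine ⟨hM.eigenvalues, ψ, fun s => ⟨hψ₀ s, fun n hn => ?_, ?_⟩, fun s t hst => ?_,
    fun m hm => ?_⟩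
  · have heig := congrFun (hM.mulVec_eigenvectorBasis s) ⟨n, hn⟩
    rw [← funext (hψ s), dirichletMatrix_mulVec q (hψ₀ s)] at heig
    rw [heig, Pi.smul_apply, smul_eq_mul]
  · simp only [sq, hinner, u.inner_eq_one]
  · exact (hinner s t).trans (u.inner_eq_zero hst)
  · have hparseval := u.sum_sq_norm_inner_right (EuclideanSpace.single ⟨m, hm⟩ (1 : ℝ))
    simpa [EuclideanSpace.inner_single_right, ← hψ] using hparseval

end Eigenbasis

section DominatedEigensystem

open scoped Topology

variable {ι : Type*}

/-- A family of pairwise orthogonal eigenfunctions of `H_q`, each normalized or zero, with energies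
in `J` and dominated by `D`. Only at the sites of `B` are the eigenvalue equation and the
completeness of the family (in the form of Parseval's identity for the delta function) imposed. -/
structure IsDominatedEigensystem (B : Set ℤ) (J : Set ℝ) (D : ι → ℤ → ℝ) (q : ℤ → ℝ) (E : ι → ℝ)
    (φ : ι → ℤ → ℝ) : Prop where
  eigen_eq : ∀ i, ∀ n ∈ B, φ i (n + 1) + φ i (n - 1) + q n * φ i n = E i * φ i n
  energy_mem : ∀ i, E i ∈ J
  abs_le : ∀ i n, |φ i n| ≤ D i n
  tsum_mul : Pairwise fun i j => ∑' n, φ i n * φ j n = 0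
  tsum_sq : ∀ i, ∑' n, φ i n ^ 2 ∈ ({0, 1} : Set ℝ)
  parseval : ∀ m ∈ B, ∑' i, φ i m ^ 2 = 1

variable {B : Set ℤ} {J : Set ℝ} {D : ι → ℤ → ℝ} {q : ℤ → ℝ}

namespace IsDominatedEigensystem

lemma of_isDirichletEigenpair [Fintype ι] {a b : ℤ} {E : ι → ℝ} {φ : ι → ℤ → ℝ}
    (h : ∀ i, IsDirichletEigenpair q a b (E i) (φ i)) (hE : ∀ i, E i ∈ J)
    (hD : ∀ i n, |φ i n| ≤ D i n)
    (horth : Pairwise fun i j => ∑ n ∈ Finset.Icc a b, φ i n * φ j n = 0)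
    (hparseval : ∀ m ∈ Finset.Icc a b, ∑ i, φ i m ^ 2 = 1) :
    IsDominatedEigensystem (Finset.Icc a b) J D q E φ where
  eigen_eq i := (h i).eigen_eq
  energy_mem := hE
  abs_le := hD
  tsum_mul i j hij :=
    (tsum_eq_sum fun n hn => by rw [(h i).eq_zero n hn, zero_mul]).trans (horth hij)
  tsum_sq i := by
    rw [tsum_eq_sum fun n hn => by rw [(h i).eq_zero n hn, sq, zero_mul], (h i).sum_sq]
    exact .inr rfl
  parseval m hm := by
    rw [tsum_fintype]
    exact hparseval m hm

lemma extend {β : Type*} (e : β ↪ ι) {E : β → ℝ} {φ : β → ℤ → ℝ}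
    (h : IsDominatedEigensystem B J (D ∘ e) q E φ) (hD : ∀ i n, 0 ≤ D i n) {E₀ : ℝ} (hE₀ : E₀ ∈ J) :
    IsDominatedEigensystem B J D q (Function.extend e E fun _ => E₀) (Function.extend e φ 0) := by
  have hE : ∀ s, Function.extend e E (fun _ => E₀) (e s) = E s := e.injective.extend_apply _ _
  have hφ : ∀ s, Function.extend e φ 0 (e s) = φ s := e.injective.extend_apply _ _
  have hE' : ∀ i ∉ Set.range e, Function.extend e E (fun _ => E₀) i = E₀ := fun i =>
    Function.extend_apply' _ _ i
  have hφ' : ∀ i ∉ Set.range e, Function.extend e φ 0 i = 0 := fun i =>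
    Function.extend_apply' _ _ i
  refine ⟨fun i n hn => ?_, fun i => ?_, fun i n => ?_, fun i j hij => ?_, fun i => ?_,
    fun m hm => ?_⟩
  · obtain ⟨s, rfl⟩ | hi := em (i ∈ Set.range e)
    · simpa only [hE, hφ] using h.eigen_eq s n hn
    · simp [hφ' i hi]
  · obtain ⟨s, rfl⟩ | hi := em (i ∈ Set.range e)
    · simpa only [hE] using h.energy_mem s
    · simpa only [hE' i hi] using hE₀
  · obtain ⟨s, rfl⟩ | hi := em (i ∈ Set.range e)
    · simpa only [hφ, Function.comp_apply] using h.abs_le s n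
    · simpa [hφ' i hi] using hD i n
  · obtain ⟨s, rfl⟩ | hi := em (i ∈ Set.range e)
    · obtain ⟨t, rfl⟩ | hj := em (j ∈ Set.range e)
      · simpa only [hφ] using h.tsum_mul (ne_of_apply_ne e hij)
      · simp [hφ' j hj]
    · simp [hφ' i hi]
  · obtain ⟨s, rfl⟩ | hi := em (i ∈ Set.range e)
    · simpa only [hφ] using h.tsum_sq s
    · simp [hφ' i hi]
  · rw [← h.parseval m hm, ← e.injective.tsum_eq]
    · simp only [hφ]
    · refine fun i hi => by_contra fun hni => hi ?_
      simp [hφ' i hni]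

lemma of_tendsto {α : Type*} {l : Filter α} [l.NeBot] {B : α → Set ℤ} {q : α → ℤ → ℝ}
    {E : α → ι → ℝ} {φ : α → ι → ℤ → ℝ}
    (h : ∀ k, IsDominatedEigensystem (B k) J D (q k) (E k) (φ k))
    (hJ : IsClosed J) (hD : ∀ i, Summable fun n => D i n ^ 2)
    (hD' : ∀ n, Summable fun i => D i n ^ 2) (hB : ∀ n, ∀ᶠ k in l, n ∈ B k)
    {q' : ℤ → ℝ} {E' : ι → ℝ} {φ' : ι → ℤ → ℝ}
    (hq : Tendsto q l (𝓝 q')) (hE : Tendsto E l (𝓝 E')) (hφ : Tendsto φ l (𝓝 φ')) :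
    IsDominatedEigensystem Set.univ J D q' E' φ' := by
  simp only [tendsto_pi_nhds] at hq hE hφ
  have hmul : ∀ i j, Tendsto (fun k => ∑' n, φ k i n * φ k j n) l (𝓝 (∑' n, φ' i n * φ' j n)) := by
    refine fun i j => tendsto_tsum_of_dominated_convergence ((hD i).add (hD j))
      (fun n => (hφ i n).mul (hφ j n)) (.of_forall fun k n => ?_)
    calc ‖φ k i n * φ k j n‖ = |φ k i n| * |φ k j n| := abs_mul _ _
      _ ≤ D i n * D j n := mul_le_mul ((h k).abs_le i n) ((h k).abs_le j n) (abs_nonneg _)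
          ((abs_nonneg _).trans ((h k).abs_le i n))
      _ ≤ D i n ^ 2 + D j n ^ 2 := by nlinarith [sq_nonneg (D i n - D j n)]
  have hnorm : ∀ i, Tendsto (fun k => ∑' n, φ k i n ^ 2) l (𝓝 (∑' n, φ' i n ^ 2)) := fun i => by
    simpa only [sq] using hmul i i
  have hparseval : ∀ m, Tendsto (fun k => ∑' i, φ k i m ^ 2) l (𝓝 (∑' i, φ' i m ^ 2)) := fun m =>
    tendsto_tsum_of_dominated_convergence (hD' m) (fun i => (hφ i m).pow 2)
      (.of_forall fun k i => by
        rw [norm_pow]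
        exact pow_le_pow_left₀ (abs_nonneg _) ((h k).abs_le i m) 2)
  refine ⟨fun i n _ => ?_, fun i => ?_, fun i n => ?_,
    fun i j hij => tendsto_nhds_unique (hmul i j) ?_, fun i => ?_,
    fun m _ => tendsto_nhds_unique (hparseval m) ?_⟩
  · refine tendsto_nhds_unique_of_eventuallyEq
      (((hφ i _).add (hφ i _)).add ((hq n).mul (hφ i n))) ((hE i).mul (hφ i n)) ?_
    filter_upwards [hB n] with k hk using (h k).eigen_eq i n hk
  · exact hJ.mem_of_tendsto (hE i) (.of_forall fun k => (h k).energy_mem i)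
  · exact le_of_tendsto (hφ i n).abs (.of_forall fun k => (h k).abs_le i n)
  · exact tendsto_const_nhds.congr fun k => ((h k).tsum_mul hij).symm
  · exact (Set.toFinite _).isClosed.mem_of_tendsto (hnorm i) (.of_forall fun k => (h k).tsum_sq i)
  · refine tendsto_const_nhds.congr' ?_
    filter_upwards [hB m] with k hk using ((h k).parseval m hk).symm

end IsDominatedEigensystem

theorem exists_isDominatedEigensystem_univ {S : ℤ → Set ℝ} (hS : ∀ n, IsCompact (S n))
    (hJ : IsCompact J) (hD : ∀ i, Summable fun n => D i n ^ 2)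
    (hD' : ∀ n, Summable fun i => D i n ^ 2)
    (hbox : ∀ N : ℕ, ∃ q E φ, (∀ n, q n ∈ S n) ∧
      IsDominatedEigensystem (Finset.Icc (-N : ℤ) N) J D q E φ) :
    ∃ q E φ, (∀ n, q n ∈ S n) ∧ IsDominatedEigensystem Set.univ J D q E φ := by
  choose q E φ hq h using hbox
  have hcompact : IsCompact ((Set.univ.pi S) ×ˢ (Set.univ.pi fun _ : ι => J) ×ˢ
      Set.univ.pi fun i => Set.univ.pi fun n => Set.Icc (-D i n) (D i n)) :=
    (isCompact_univ_pi hS).prod <| (isCompact_univ_pi fun _ => hJ).prod <|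
      isCompact_univ_pi fun i => isCompact_univ_pi fun n => isCompact_Icc
  obtain ⟨⟨q', E', φ'⟩, hmem, hlim⟩ := hcompact.ultrafilter_le_nhds
    ((hyperfilter ℕ).map fun N => (q N, E N, φ N)) <| tendsto_principal.mpr <|
      .of_forall fun N => ⟨fun n _ => hq N n, fun i _ => (h N).energy_mem i,
        fun i _ n _ => abs_le.mp ((h N).abs_le i n)⟩
  have hlim : Tendsto (fun N => (q N, E N, φ N)) (hyperfilter ℕ : Filter ℕ) (𝓝 (q', E', φ')) := hlim
  refine ⟨q', E', φ', fun n => hmem.1 n trivial, .of_tendsto h hJ.isClosed hD hD' (fun n => ?_)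
    hlim.fst_nhds hlim.snd_nhds.fst_nhds hlim.snd_nhds.snd_nhds⟩
  refine Nat.hyperfilter_le_atTop ?_
  filter_upwards [eventually_ge_atTop n.natAbs] with N hN
  rw [Finset.coe_Icc, Set.mem_Icc]
  omega

end DominatedEigensystem

section LocalizationCentres

lemma exists_embedding_sigma_fin {α β : Type*} [Finite β] (c : β → α) (k : α → ℕ)
    (h : ∀ x, Nat.card {s // c s = x} ≤ k x) :
    ∃ e : β ↪ Σ x, Fin (k x), ∀ s, (e s).1 = c s := by
  have hfiber : ∀ x, Nonempty ({s // c s = x} ↪ Fin (k x)) := fun x => by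
    have := Fintype.ofFinite {s // c s = x}
    exact Function.Embedding.nonempty_of_card_le (by simpa using h x)
  exact ⟨(Equiv.sigmaFiberEquiv c).symm.toEmbedding.trans
    (.sigmaMap (.refl α) fun x => (hfiber x).some), fun _ => rfl⟩

variable {q w : ℤ → ℝ} {a b : ℤ}

lemma IsDirichletEigenpair.exists_le_sq {E : ℝ} {φ : ℤ → ℝ} (h : IsDirichletEigenpair q a b E φ)
    (hw : HasSum w 1) : ∃ x, w x ≤ φ x ^ 2 := by
  by_contra! hlt
  have hφ : HasSum (fun x => φ x ^ 2) 1 := h.sum_sq ▸ hasSum_sum_of_ne_finset_zero fun x hx => by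
    rw [h.eq_zero x hx, sq, zero_mul]
  exact (hasSum_lt (fun x => (hlt x).le) (hlt 0) hφ hw).false

lemma card_fiber_le_floor_inv {α β : Type*} [Fintype β] {c : β → α} {x : α} {f : β → ℝ} {w : ℝ}
    (hw : 0 < w) (hf : ∀ s, 0 ≤ f s) (hsum : ∑ s, f s ≤ 1) (hc : ∀ s, c s = x → w ≤ f s) :
    Nat.card {s // c s = x} ≤ ⌊w⁻¹⌋₊ := by
  classical
  rw [Nat.le_floor_iff (by positivity), Nat.card_eq_fintype_card, Fintype.card_subtype,
    ← one_div, le_div_iff₀ hw, ← nsmul_eq_mul]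
  refine (Finset.card_nsmul_le_sum _ f w fun s hs => hc s (Finset.mem_filter.mp hs).2).trans ?_
  exact (Finset.sum_le_univ_sum_of_nonneg hf).trans hsum

theorem exists_isDominatedEigensystem_Icc {J : Set ℝ} (hJ : J.Nonempty) {d : ℤ → ℤ → ℝ}
    (hd : ∀ x n, 0 ≤ d x n) (hw : ∀ x, 0 < w x) (hw₁ : HasSum w 1)
    (h : ∀ E φ, IsDirichletEigenpair q a b E φ →
      E ∈ J ∧ ∀ x, w x ≤ φ x ^ 2 → ∀ n, |φ n| ≤ d x n) :
    ∃ E φ, IsDominatedEigensystem (Finset.Icc a b) J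
      (fun i : Σ x : ℤ, Fin ⌊(w x)⁻¹⌋₊ => d i.1) q E φ := by
  obtain ⟨E, ψ, hpair, horth, hparseval⟩ := exists_isDirichletEigenpair_basis q a b
  choose c hc using fun s => (hpair s).exists_le_sq hw₁
  have hmass : ∀ x, ∑ s, ψ s x ^ 2 ≤ 1 := fun x => by
    by_cases hx : x ∈ Finset.Icc a b
    · exact (hparseval x hx).le
    · simp [fun s => (hpair s).eq_zero x hx]
  obtain ⟨e, he⟩ := exists_embedding_sigma_fin c (fun x => ⌊(w x)⁻¹⌋₊) fun x =>
    card_fiber_le_floor_inv (hw x) (fun s => sq_nonneg (ψ s x)) (hmass x) fun s hs => hs ▸ hc s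
  obtain ⟨E₀, hE₀⟩ := hJ
  have hbox := IsDominatedEigensystem.of_isDirichletEigenpair
    (D := (fun i : Σ x : ℤ, Fin ⌊(w x)⁻¹⌋₊ => d i.1) ∘ e) hpair
    (fun s => (h _ _ (hpair s)).1) (fun s n => ?_) horth hparseval
  · exact ⟨_, _, hbox.extend e (fun i => hd i.1) hE₀⟩
  · rw [Function.comp_apply, he]
    exact (h _ _ (hpair s)).2 (c s) (hc s) n

end LocalizationCentres

section HilbertBasis

open scoped RealInnerProductSpace

lemma inner_eq_zero_of_tsum_sq_inner_eq {H ι : Type*} [NormedAddCommGroup H]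
    [InnerProductSpace ℝ H] {v : ι → H} (hv : Orthonormal ℝ v) {x f : H}
    (hx : ∑' i, ⟪v i, x⟫ ^ 2 = ‖x‖ ^ 2) (hf : ∀ i, ⟪v i, f⟫ = 0) : ⟪x, f⟫ = 0 := by
  -- Bessel's inequality for `x + t • f` says that `f` cannot bring `x` closer to the origin.
  have hbessel : ∀ t : ℝ, 0 ≤ ‖f‖ ^ 2 * (t * t) + 2 * ⟪x, f⟫ * t + 0 := fun t => by
    have hle := hv.tsum_inner_products_le (x + t • f)
    simp only [inner_add_right, inner_smul_right, hf, mul_zero, add_zero, Real.norm_eq_abs, sq_abs,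
      hx, norm_add_sq_real, norm_smul] at hle
    rw [mul_pow, sq_abs] at hle
    linarith
  have hdiscrim := discrim_le_zero hbessel
  rw [discrim, mul_zero, sub_zero] at hdiscrim
  simpa using le_antisymm hdiscrim (sq_nonneg _)

lemma orthogonal_span_range_eq_bot {ι α : Type*} {v : ι → lp (fun _ : α => ℝ) 2}
    (hv : Orthonormal ℝ v) (h : ∀ m, ∑' i, v i m ^ 2 = 1) :
    (Submodule.span ℝ (Set.range v))ᗮ = ⊥ := by
  classical
  refine (Submodule.eq_bot_iff _).mpr fun f hf => lp.ext (funext fun m => ?_)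
  have hf₀ : ∀ i, ⟪v i, f⟫ = 0 := fun i =>
    (Submodule.mem_orthogonal _ _).mp hf _ (Submodule.subset_span ⟨i, rfl⟩)
  set δ : lp (fun _ : α => ℝ) 2 := lp.single 2 m (1 : ℝ)
  have hdelta : ∀ u, ⟪δ, u⟫ = u m := fun u => by
    rw [lp.inner_single_left]
    simp
  have hbessel : ∑' i, ⟪v i, δ⟫ ^ 2 = ‖δ‖ ^ 2 := by
    simp_rw [real_inner_comm δ, hdelta, h]
    simp [δ, lp.norm_single]
  have hinner := inner_eq_zero_of_tsum_sq_inner_eq hv hbessel hf₀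
  rwa [hdelta] at hinner

lemma infinite_of_tsum_sq_eq_one {ι α : Type*} [Infinite α] {f : ι → α → ℝ}
    (hf : ∀ i, HasSum (fun n => f i n ^ 2) 1) (h : ∀ n, ∑' i, f i n ^ 2 = 1) : Infinite ι := by
  refine not_finite_iff_infinite.mp fun hfin => ?_
  have := Fintype.ofFinite ι
  simp only [tsum_fintype] at h
  obtain ⟨s, hs⟩ := Infinite.exists_subset_card_eq α (Fintype.card ι + 1)
  have hcard : (s.card : ℝ) ≤ Fintype.card ι := calc
    (s.card : ℝ) = ∑ n ∈ s, ∑ i, f i n ^ 2 := by simp [h]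
    _ = ∑ i, ∑ n ∈ s, f i n ^ 2 := Finset.sum_comm
    _ ≤ ∑ _ : ι, 1 := Finset.sum_le_sum fun i _ => sum_le_hasSum s (fun _ _ => sq_nonneg _) (hf i)
    _ = Fintype.card ι := by simp
  rw [hs] at hcard
  norm_num at hcard

variable {ι : Type*} [Countable ι] {J : Set ℝ} {D : ι → ℤ → ℝ} {q : ℤ → ℝ} {E : ι → ℝ}
  {φ : ι → ℤ → ℝ}

lemma IsDominatedEigensystem.exists_hilbertBasis
    (h : IsDominatedEigensystem Set.univ J D q E φ) (hD : ∀ i, Summable fun n => D i n ^ 2) :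
    ∃ (Φ : HilbertBasis ℕ ℝ (lp (fun _ : ℤ => ℝ) 2)) (σ : ℕ → ι), ∀ s, ⇑(Φ s) = φ (σ s) := by
  have hsummable : ∀ i, Summable fun n => φ i n ^ 2 := fun i =>
    (hD i).of_nonneg_of_le (fun n => sq_nonneg _) fun n => by
      rw [← sq_abs]
      exact pow_le_pow_left₀ (abs_nonneg _) (h.abs_le i n) 2
  set I := {i | ∑' n, φ i n ^ 2 = 1}
  have hnorm : ∀ i : I, HasSum (fun n => φ i n ^ 2) 1 := fun i => i.2 ▸ (hsummable i).hasSum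
  have hparseval : ∀ m, ∑' i : I, φ i m ^ 2 = 1 := fun m => by
    rw [← h.parseval m trivial]
    refine tsum_subtype_eq_of_support_subset (f := fun i => φ i m ^ 2) fun i hi => ?_
    refine (h.tsum_sq i).resolve_left fun h₀ => hi ?_
    exact congrFun ((hasSum_zero_iff_of_nonneg fun n => sq_nonneg (φ i n)).mp
      (h₀ ▸ (hsummable i).hasSum)) m
  have := infinite_of_tsum_sq_eq_one hnorm hparseval
  obtain ⟨e⟩ := nonempty_equiv_of_countable (α := ℕ) (β := I)
  set v : ℕ → lp (fun _ : ℤ => ℝ) 2 := fun s =>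
    ⟨φ (e s), memℓp_gen (by simpa using hsummable (e s))⟩
  have hv : Orthonormal ℝ v := by
    refine orthonormal_iff_ite.mpr fun s t => ?_
    rw [lp.inner_eq_tsum]
    split_ifs with hst
    · subst hst
      exact (tsum_congr fun n => real_inner_self_eq_norm_sq _ |>.trans (sq_abs _)).trans
        (hnorm (e s)).tsum_eq
    · exact (tsum_congr fun n => mul_comm _ _).trans
        (h.tsum_mul (Subtype.coe_injective.comp e.injective |>.ne hst))
  have hbot := orthogonal_span_range_eq_bot hv fun m =>
    (e.tsum_eq fun i : I => φ i m ^ 2).trans (hparseval m)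
  refine ⟨.mkOfOrthogonalEqBot hv hbot, fun s => e s, fun s => ?_⟩
  rw [HilbertBasis.coe_mkOfOrthogonalEqBot]

theorem IsDominatedEigensystem.hasSULE {c : ι → ℤ} {f : ℤ → ℝ} (hf : IsSubexponential f) {γ : ℝ}
    (hγ : 0 < γ) (h : IsDominatedEigensystem Set.univ J
      (fun i n => f (c i) * exp (-γ * |(n : ℝ) - c i|)) q E φ) : HasSULE q := by
  obtain ⟨Φ, σ, hΦ⟩ := h.exists_hilbertBasis fun i =>
    summable_sq_mul_exp_neg_mul_abs_sub _ hγ _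
  refine ⟨Φ, c ∘ σ, γ, hγ, fun s => ⟨E (σ s), ?_⟩, fun ε hε => ?_⟩
  · rw [hΦ]
    exact fun n => h.eigen_eq (σ s) n trivial
  · obtain ⟨C, hC⟩ := hf ε hε
    refine ⟨C, fun s n => ?_⟩
    rw [hΦ]
    exact (h.abs_le (σ s) n).trans (mul_le_mul_of_nonneg_right (hC _) (exp_nonneg _))

end HilbertBasis

section RandomPotential

open MeasureTheory
open scoped NNReal ProbabilityTheory

lemma summable_sigma_fin {α : Type*} {k : α → ℕ} {f : α → ℝ} (hf : ∀ x, 0 ≤ f x)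
    (h : Summable fun x => k x * f x) : Summable fun i : Σ x, Fin (k x) => f i.1 := by
  refine (summable_sigma_of_nonneg fun i => hf i.1).mpr ⟨fun x => .of_finite, ?_⟩
  simpa using h

theorem exists_forall_mem_hasSULE_of_Icc {S : ℤ → Set ℝ} (hS : ∀ n, IsCompact (S n)) {J : Set ℝ}
    (hJ : IsCompact J) {k : ℤ → ℕ} (hk : IsSubexponential fun x => k x) {f : ℤ → ℝ}
    (hf : IsSubexponential f) (hf₀ : ∀ x, 0 ≤ f x) {γ : ℝ} (hγ : 0 < γ)
    (hbox : ∀ N : ℕ, ∃ q E φ, (∀ n, q n ∈ S n) ∧ IsDominatedEigensystem (Finset.Icc (-N : ℤ) N) J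
      (fun (i : Σ x, Fin (k x)) n => f i.1 * exp (-γ * |(n : ℝ) - i.1|)) q E φ) :
    ∃ q, (∀ n, q n ∈ S n) ∧ HasSULE q := by
  have hcol : ∀ n : ℤ, Summable fun i : Σ x, Fin (k x) =>
      (f i.1 * exp (-γ * |(n : ℝ) - i.1|)) ^ 2 := fun n => by
    refine summable_sigma_fin (f := fun x => (f x * exp (-γ * |(n : ℝ) - x|)) ^ 2)
      (fun x => sq_nonneg _) ?_
    simp only [sq_mul_exp_neg_mul, ← mul_assoc]
    exact (hk.mul (hf.pow hf₀ two_ne_zero) (fun x => Nat.cast_nonneg _) fun x => sq_nonneg _)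
      |>.summable_mul_exp (fun x => by positivity) (by positivity) n
  obtain ⟨q, E, φ, hq, h⟩ := exists_isDominatedEigensystem_univ hS hJ
    (fun i => summable_sq_mul_exp_neg_mul_abs_sub _ hγ _) hcol hbox
  exact ⟨q, hq, h.hasSULE hf hγ⟩

theorem exists_forall_mem_hasSULE {μ : ℤ → Measure ℝ} [∀ i, IsProbabilityMeasure (μ i)] {K : ℝ≥0}
    (hK : 4 * √K < 1) (hμ : ∀ i, μ i ≤ K • volume) {S : ℤ → Set ℝ} (hS : ∀ i, IsCompact (S i))
    {lo hi : ℝ} (hSI : ∀ i, S i ⊆ Set.Icc lo hi) (hμS : ∀ i, ∀ᵐ v ∂μ i, v ∈ S i) :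
    ∃ q, (∀ i, q i ∈ S i) ∧ HasSULE q := by
  obtain ⟨w, hw, hw₁, hsubexp⟩ := exists_hasSum_one_isSubexponential_inv
  have hw₀ : ∀ x, 0 ≤ (w x)⁻¹ := fun x => inv_nonneg.mpr (hw x).le
  obtain ⟨r, hKr, hr₁⟩ := exists_between hK
  have hr : 0 < r := (by positivity : (0 : ℝ) ≤ 4 * √K).trans_lt hKr
  set ρ := √r
  have hρ : 0 < ρ := sqrt_pos.mpr hr
  have hρ₁ : ρ < 1 := (sqrt_lt' one_pos).mpr (by simpa using hr₁)
  have hKρ : 4 * √K ≤ ρ ^ 2 := hKr.le.trans_eq (sq_sqrt hr.le).symm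
  set J := Set.Icc (lo - 2) (hi + 2)
  have hJ : IsCompact J := isCompact_Icc
  obtain ⟨C, hC⟩ := exists_gt (K * volume.real J * ((1 + ρ) / (1 - ρ)))
  set f : ℤ → ℝ := fun x => C ^ 2 * (w x)⁻¹ ^ 4
  have hf₀ : ∀ x, 0 ≤ f x := fun x => by positivity
  have hdecay : ∀ x n : ℤ, (C * (w x)⁻¹ ^ 2 * ρ ^ (x - n).natAbs) ^ 2 =
      f x * exp (-(-(2 * log ρ)) * |(n : ℝ) - x|) := fun x n => by
    rw [pow_natAbs_sub_eq_exp hρ, ← neg_neg (log ρ), sq_mul_exp_neg_mul]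
    simp only [f]
    ring_nf
  refine exists_forall_mem_hasSULE_of_Icc hS hJ (hsubexp.mono fun x => Nat.floor_le (hw₀ x))
    ((hsubexp.pow hw₀ four_ne_zero).const_mul (sq_nonneg C)) hf₀ (γ := -(2 * log ρ))
    (by linarith [log_neg hρ hρ₁]) fun N => ?_
  obtain ⟨q, hq, hloc⟩ := exists_forall_isDirichletEigenpair_abs_le hμ hμS hJ hw hw₁ hρ hρ₁ hKρ hC
    (-N) N
  have hqI : ∀ n, q n ∈ Set.Icc lo hi := fun n => hSI n (hq n)
  have hJne : J.Nonempty := Set.nonempty_Icc.mpr (by linarith [(hqI 0).1, (hqI 0).2])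
  obtain ⟨E, φ, h⟩ := exists_isDominatedEigensystem_Icc hJne
    (fun x n => mul_nonneg (hf₀ x) (exp_nonneg _)) hw hw₁ fun E φ hpair =>
      have hE : E ∈ J := hpair.energy_mem_Icc hqI
      ⟨hE, fun x hx n => hdecay x n ▸ hloc E hE φ hpair x hx n⟩
  exact ⟨q, E, φ, hq, h⟩

lemma cond_le_inv_smul {α : Type*} [MeasurableSpace α] (μ : Measure α) (s : Set α) :
    μ[|s] ≤ (μ s)⁻¹ • μ := by
  rw [ProbabilityTheory.cond]
  gcongr
  exact Measure.restrict_le_self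

theorem exists_forall_mem_Icc_hasSULE {L : ℝ≥0} (hL : 16 < L) {c : ℤ → ℝ}
    (hc : BddBelow (Set.range c)) (hc' : BddAbove (Set.range c)) :
    ∃ q, (∀ n, q n ∈ Set.Icc (c n) (c n + L)) ∧ HasSULE q := by
  obtain ⟨lo, hlo⟩ := hc
  obtain ⟨hi, hhi⟩ := hc'
  have hL₀ : L ≠ 0 := (pos_of_gt hL).ne'
  have hvol : ∀ n, volume (Set.Icc (c n) (c n + L)) = L := fun n => by simp
  have : ∀ n, IsProbabilityMeasure (volume[|Set.Icc (c n) (c n + L)]) :=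
    fun n => ProbabilityTheory.cond_isProbabilityMeasure_of_finite (by simpa [hvol])
      (by simp [hvol])
  have hK : 4 * √(L⁻¹ : ℝ≥0) < 1 := by
    have : 4 < √L := (lt_sqrt (by norm_num)).mpr (by norm_num; exact_mod_cast hL)
    rw [NNReal.coe_inv, sqrt_inv, ← div_eq_mul_inv]
    exact (div_lt_one (by linarith)).mpr this
  refine exists_forall_mem_hasSULE (μ := fun n => volume[|Set.Icc (c n) (c n + L)]) hK
    (fun n => ?_) (fun n => isCompact_Icc)
    (fun n => Set.Icc_subset_Icc (hlo ⟨n, rfl⟩) (add_le_add_left (hhi ⟨n, rfl⟩) _))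
    fun n => ProbabilityTheory.ae_cond_mem measurableSet_Icc
  simpa [hvol, ← ENNReal.coe_inv hL₀] using
    cond_le_inv_smul volume (Set.Icc (c n) (c n + L))

end RandomPotential

lemma deltaPot_eq_zero {g : ℤ → ℝ} {M c : ℝ} (hM : ∀ n, |g n| ≤ M) (hc : 0 < c)
    (hg : ∀ n ≠ 0, c ≤ |g n - g 0|) : deltaPot g = 0 := by
  have hle : ∀ n m, |g (n - m) - g m| ≤ M + M := fun n m =>
    (abs_sub _ _).trans (add_le_add (hM _) (hM _))
  have hlog : ∀ n ≠ 0, |log (⨆ m, |g (n - m) - g m|)| ≤ max |log c| |log (M + M)| := fun n hn => by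
    have hsup : c ≤ ⨆ m, |g (n - m) - g m| :=
      (hg n hn).trans <| by
        simpa using le_ciSup ⟨M + M, Set.forall_mem_range.mpr (hle n)⟩ 0
    exact abs_le_max_abs_abs (log_le_log hc hsup)
      (log_le_log (hc.trans_le hsup) (ciSup_le (hle n)))
  have habs : Tendsto (fun n : ℤ => |(n : ℝ)|) cofinite atTop := by
    simp only [← Int.norm_eq_abs, ← cocompact_eq_cofinite]
    exact tendsto_norm_cocompact_atTop
  refine (squeeze_zero_norm' ?_ (habs.const_div_atTop (max |log c| |log (M + M)|))).limsup_eq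
  filter_upwards [(Set.finite_singleton (0 : ℤ)).eventually_cofinite_notMem] with n hn
  rw [norm_div, norm_neg, Real.norm_eq_abs, Real.norm_eq_abs, abs_abs]
  exact div_le_div_of_nonneg_right (hlog n hn) (abs_nonneg _)

theorem exists_SULE_with_deltaPot_zero :
    ∃ g : ℤ → ℝ, (∃ M : ℝ, ∀ n : ℤ, |g n| ≤ M) ∧
      deltaPot g = 0 ∧ HasSULE g := by
  set c : ℤ → ℝ := Pi.single 0 50
  have hc₀ : c 0 = 50 := Pi.single_eq_same ..
  have hc : ∀ n ≠ 0, c n = 0 := fun n hn => Pi.single_eq_of_ne hn _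
  have hcI : ∀ n, c n ∈ Set.Icc 0 50 := fun n => by
    obtain rfl | hn := eq_or_ne n 0 <;> simp [*]
  obtain ⟨g, hg, hSULE⟩ := exists_forall_mem_Icc_hasSULE (L := 25) (by norm_num)
    ⟨0, Set.forall_mem_range.mpr fun n => (hcI n).1⟩
    ⟨50, Set.forall_mem_range.mpr fun n => (hcI n).2⟩
  simp only [NNReal.coe_ofNat] at hg
  have hM : ∀ n, |g n| ≤ 75 := fun n =>
    abs_le.mpr ⟨by linarith [(hg n).1, (hcI n).1], by linarith [(hg n).2, (hcI n).2]⟩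
  have hgap : ∀ n ≠ 0, 25 ≤ |g n - g 0| := fun n hn => by
    rw [abs_sub_comm]
    exact le_abs.mpr (.inl (by linarith [(hg 0).1, (hg n).2, hc n hn]))
  exact ⟨g, ⟨75, hM⟩, deltaPot_eq_zero hM (by norm_num) hgap, hSULE⟩
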